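/- arXiv:1011.6426 — 3 statements merged into one kernel-verified Lean document; each statement's English description precedes it below -/
import Mathlib

section
/- Periodic fermionic factorization (Lemma 5.2 / Lemma 3.2): Let l_1 > ... > l_s and m_1,...,m_s be positive integers, let p_1 ≥ 0 be an integer and define p_i = p_{i−1} + (m_1+...+m_{i−1})(l_{i−1} − l_i) for 2 ≤ i ≤ s, and p_{s+1} = p_s + (m_1+...+m_s) l_s. Let Ω_s be the set of integer tuples x = (x_{i,j}) with: 0 ≤ x_{i,1} ≤ ... ≤ x_{i,m_i} ≤ p_i + min(x_{i,1}, l_i − 1) for each i; x_{j,m_j} − p_j ≤ x_{i,1} for i < j; and x_{i,m_i} ≤ p_i + l_i − l_j + x_{j,1} − 1 for i < j. Then Σ_{x ∈ Ω_s} q^{|x|} = ([p_{s+1}]_q/[m_1]_q) · [p_1+m_1−1 choose m_1−1]_q · ∏_{i=2}^s [p_i+m_i−1 choose m_i]_q, where |x| = Σ_{i,k} x_{i,k}. -/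
open Finset

noncomputable def q : RatFunc ℚ := RatFunc.X

noncomputable def qInt (n : ℕ) : RatFunc ℚ := ∑ i ∈ Finset.range n, q ^ i

noncomputable def qPoch (n : ℕ) : RatFunc ℚ := ∏ i ∈ Finset.range n, (1 - q ^ (i + 1))

noncomputable def qb (n m : ℕ) : RatFunc ℚ := qPoch n / (qPoch m * qPoch (n - m))

/-!
Fix the last block `z = (z_1 ≤ ⋯ ≤ z_m)` of a configuration, and let `L` and `p` be the last `l_i`
and `p_i`. The conditions linking the other blocks to `z` only bound their entries below by
`d = (z_m - p)⁺` and replace each `l_i` by `l_i - L + c`, where `c = min(z_1, L)`. As the remaining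
conditions are invariant under translation, subtracting `d` leaves a configuration set of the same
kind with one block fewer, and by induction its contribution is, up to a factor independent of `z`,
`t ^ (|z| + M d) - t ^ (|z| + p + M c)`, where `M` is the total length of the other blocks. The
rotation `(z_1, …, z_m) ↦ (z_2, …, z_m, z_1 + p)` sends the second power to the first one, so
the sum over `z` telescopes to sequences with `z_m < p` and sequences with `z_1 ≥ L`, both of which
are counted by Gaussian binomials.
-/

section MonotoneTuples

variable {α : Type*} [Preorder α] {k : ℕ} {c : α} {z : Fin k → α}

theorem monotone_cons_iff :
    Monotone (Fin.cons c z : Fin (k + 1) → α) ↔ (∀ i, c ≤ z i) ∧ Monotone z := by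
  simp [Monotone, Fin.forall_fin_succ]

theorem monotone_snoc_iff :
    Monotone (Fin.snoc z c : Fin (k + 1) → α) ↔ Monotone z ∧ ∀ i, z i ≤ c := by
  simp [Monotone, Fin.forall_fin_succ', forall_and, (Fin.castSucc_lt_last _).not_ge, Fin.le_last]

end MonotoneTuples

/-- The weakly increasing sequences of length `k` with entries in `[a, b)`. -/
def monoSeqs (k a b : ℕ) : Finset (Fin k → ℕ) :=
  {z ∈ Fintype.piFinset fun _ : Fin k => Ico a b | Monotone z}

theorem mem_monoSeqs {k a b : ℕ} {z : Fin k → ℕ} :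
    z ∈ monoSeqs k a b ↔ (∀ i, a ≤ z i ∧ z i < b) ∧ Monotone z := by
  simp [monoSeqs]

/-- The generating function of the partitions with at most `k` parts, all less than `p`. -/
def boxGF {R : Type*} [CommSemiring R] (t : R) (k p : ℕ) : R :=
  ∑ z ∈ monoSeqs k 0 p, t ^ ∑ i, z i

section boxGF

variable {R : Type*} [CommSemiring R] (t : R)

theorem boxGF_zero_left (p : ℕ) : boxGF t 0 p = 1 := by
  simp [boxGF, monoSeqs, Subsingleton.monotone]

theorem sum_monoSeqs_add (k p c : ℕ) :
    ∑ z ∈ monoSeqs k c (p + c), t ^ ∑ i, z i = t ^ (k * c) * boxGF t k p := by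
  rw [boxGF, mul_sum]
  refine sum_nbij' (fun z i => z i - c) (fun z i => z i + c) ?_ ?_ ?_ ?_ ?_
  · intro z hz
    rw [mem_monoSeqs] at hz ⊢
    exact ⟨fun i => by have := hz.1 i; omega, fun i j hij => Nat.sub_le_sub_right (hz.2 hij) c⟩
  · intro z hz
    rw [mem_monoSeqs] at hz ⊢
    exact ⟨fun i => by have := hz.1 i; omega, fun i j hij => Nat.add_le_add_right (hz.2 hij) c⟩
  · intro z hz
    funext i
    exact Nat.sub_add_cancel ((mem_monoSeqs.1 hz).1 i).1
  · intro z _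
    simp
  · intro z hz
    have hsum : ∑ i, z i = ∑ i, (z i - c + c) :=
      sum_congr rfl fun i _ => (Nat.sub_add_cancel ((mem_monoSeqs.1 hz).1 i).1).symm
    rw [← pow_add, hsum, sum_add_distrib]
    simp [add_comm]

theorem cons_mem_monoSeqs_iff {k a b : ℕ} (hab : a < b) {z : Fin k → ℕ} :
    (Fin.cons a z : Fin (k + 1) → ℕ) ∈ monoSeqs (k + 1) a b ↔ z ∈ monoSeqs k a b := by
  simp only [mem_monoSeqs, Fin.forall_fin_succ, Fin.cons_zero, Fin.cons_succ, monotone_cons_iff]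
  grind

theorem snoc_mem_monoSeqs_iff {k a b : ℕ} (hab : a ≤ b) {z : Fin k → ℕ} :
    (Fin.snoc z b : Fin (k + 1) → ℕ) ∈ monoSeqs (k + 1) a (b + 1) ↔ z ∈ monoSeqs k a (b + 1) := by
  simp only [mem_monoSeqs, Fin.forall_fin_succ', Fin.snoc_castSucc, Fin.snoc_last,
    monotone_snoc_iff]
  grind

theorem sum_monoSeqs_head_eq (k : ℕ) {a b : ℕ} (hab : a < b) :
    ∑ z ∈ monoSeqs (k + 1) a b with z 0 = a, t ^ ∑ i, z i =
      t ^ a * ∑ z ∈ monoSeqs k a b, t ^ ∑ i, z i := by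
  rw [mul_sum]
  symm
  refine sum_nbij' (fun z => Fin.cons a z) Fin.tail ?_ ?_ ?_ ?_ ?_
  · intro z hz
    simpa [cons_mem_monoSeqs_iff hab] using hz
  · intro z hz
    obtain ⟨hz, rfl⟩ := mem_filter.1 hz
    rwa [← cons_mem_monoSeqs_iff hab, Fin.cons_self_tail]
  · intro z _
    rfl
  · intro z hz
    obtain ⟨hz, rfl⟩ := mem_filter.1 hz
    exact Fin.cons_self_tail z
  · intro z _
    simp [Fin.sum_univ_succ, pow_add]

theorem sum_monoSeqs_last_eq (k : ℕ) {a b : ℕ} (hab : a ≤ b) :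
    ∑ z ∈ monoSeqs (k + 1) a (b + 1) with z (Fin.last k) = b, t ^ ∑ i, z i =
      t ^ b * ∑ z ∈ monoSeqs k a (b + 1), t ^ ∑ i, z i := by
  rw [mul_sum]
  symm
  refine sum_nbij' (fun z => Fin.snoc z b) Fin.init ?_ ?_ ?_ ?_ ?_
  · intro z hz
    simpa [snoc_mem_monoSeqs_iff hab] using hz
  · intro z hz
    obtain ⟨hz, rfl⟩ := mem_filter.1 hz
    rwa [← snoc_mem_monoSeqs_iff hab, Fin.snoc_init_self]
  · intro z _
    exact Fin.init_snoc _ _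
  · intro z hz
    obtain ⟨hz, rfl⟩ := mem_filter.1 hz
    exact Fin.snoc_init_self z
  · intro z _
    simp [Fin.sum_univ_castSucc, pow_add, mul_comm]

theorem boxGF_succ_succ_of_last (k p : ℕ) :
    boxGF t (k + 1) (p + 1) = boxGF t (k + 1) p + t ^ p * boxGF t k (p + 1) := by
  have hlt : {z ∈ monoSeqs (k + 1) 0 (p + 1) | ¬ z (Fin.last k) = p} = monoSeqs (k + 1) 0 p := by
    ext z
    simp only [mem_filter, mem_monoSeqs, Monotone, Fin.forall_fin_succ']
    grind
  rw [boxGF, ← sum_filter_not_add_sum_filter _ fun z => z (Fin.last k) = p, hlt,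
    sum_monoSeqs_last_eq t k p.zero_le, boxGF, boxGF]

theorem boxGF_succ_succ_of_head (k p : ℕ) :
    boxGF t (k + 1) (p + 1) = boxGF t k (p + 1) + t ^ (k + 1) * boxGF t (k + 1) p := by
  have hpos : {z ∈ monoSeqs (k + 1) 0 (p + 1) | ¬ z 0 = 0} = monoSeqs (k + 1) 1 (p + 1) := by
    ext z
    simp only [mem_filter, mem_monoSeqs, Monotone, Fin.forall_fin_succ]
    grind
  rw [boxGF, ← sum_filter_add_sum_filter_not _ fun z => z 0 = 0, hpos,
    sum_monoSeqs_head_eq t k p.succ_pos, pow_zero, one_mul, ← boxGF, sum_monoSeqs_add, mul_one]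

end boxGF

theorem one_sub_pow_mul_boxGF {R : Type*} [CommRing R] (t : R) (k p : ℕ) :
    (1 - t ^ (k + 1)) * boxGF t (k + 1) p = (1 - t ^ p) * boxGF t k (p + 1) := by
  linear_combination boxGF_succ_succ_of_head t k p - boxGF_succ_succ_of_last t k p

/-- The weakly increasing sequences with entries below `p + l` and spread at most `p`: the possible
values of the last block of a configuration, cut out by the conditions that do not involve the
other blocks. -/
def cyclicSeqs (k p l : ℕ) : Finset (Fin k → ℕ) :=
  {z ∈ Fintype.piFinset fun _ : Fin k => range (p + l) | Monotone z ∧ ∀ i j, z i ≤ p + z j}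

theorem mem_cyclicSeqs {k p l : ℕ} {z : Fin k → ℕ} :
    z ∈ cyclicSeqs k p l ↔ (∀ i, z i < p + l) ∧ Monotone z ∧ ∀ i j, z i ≤ p + z j := by
  simp [cyclicSeqs]

theorem cyclicSeqs_zero_right (k p : ℕ) : cyclicSeqs k p 0 = monoSeqs k 0 p := by
  ext z
  simp only [mem_cyclicSeqs, mem_monoSeqs]
  grind

theorem filter_last_lt_cyclicSeqs (k p l : ℕ) :
    {z ∈ cyclicSeqs (k + 1) p l | ¬ p ≤ z (Fin.last k)} = monoSeqs (k + 1) 0 p := by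
  ext z
  simp only [mem_filter, mem_cyclicSeqs, mem_monoSeqs, not_le]
  constructor
  · rintro ⟨⟨-, hz, -⟩, hp⟩
    exact ⟨fun i => ⟨Nat.zero_le _, (hz (Fin.le_last i)).trans_lt hp⟩, hz⟩
  · grind

theorem filter_le_head_cyclicSeqs (k p l : ℕ) :
    {z ∈ cyclicSeqs (k + 1) p l | ¬ z 0 < l} = monoSeqs (k + 1) l (p + l) := by
  ext z
  simp only [mem_filter, mem_cyclicSeqs, mem_monoSeqs, not_lt]
  constructor
  · rintro ⟨⟨hb, hz, -⟩, h0⟩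
    exact ⟨fun i => ⟨h0.trans (hz (Fin.zero_le i)), hb i⟩, hz⟩
  · grind

theorem filter_last_ne_cyclicSeqs (k p l : ℕ) :
    {z ∈ cyclicSeqs (k + 1) p (l + 1) | ¬ z (Fin.last k) = p + l} = cyclicSeqs (k + 1) p l := by
  ext z
  simp only [mem_filter, mem_cyclicSeqs]
  constructor
  · rintro ⟨⟨hb, hz, hs⟩, hp⟩
    exact ⟨fun i => by grind [hz (Fin.le_last i)], hz, hs⟩
  · grind

theorem filter_last_eq_cyclicSeqs (k p l : ℕ) :
    {z ∈ cyclicSeqs (k + 1) p (l + 1) | z (Fin.last k) = p + l} =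
      {z ∈ monoSeqs (k + 1) l (p + l + 1) | z (Fin.last k) = p + l} := by
  ext z
  simp only [mem_filter, mem_cyclicSeqs, mem_monoSeqs]
  constructor
  · rintro ⟨⟨hb, hz, hs⟩, hlast⟩
    exact ⟨⟨fun i => by grind [hs (Fin.last k) i], hz⟩, hlast⟩
  · grind

theorem sum_cyclicSeqs {R : Type*} [CommRing R] (t : R) (k p l : ℕ) :
    (1 - t ^ (k + 1)) * ∑ z ∈ cyclicSeqs (k + 1) p l, t ^ ∑ i, z i =
      (1 - t ^ (p + (k + 1) * l)) * boxGF t k (p + 1) := by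
  induction l with
  | zero => simpa [cyclicSeqs_zero_right, boxGF] using one_sub_pow_mul_boxGF t k p
  | succ l ih =>
    rw [← sum_filter_add_sum_filter_not _ fun z => z (Fin.last k) = p + l,
      filter_last_ne_cyclicSeqs, filter_last_eq_cyclicSeqs,
      sum_monoSeqs_last_eq t k (Nat.le_add_left l p), add_right_comm, sum_monoSeqs_add, mul_add, ih]
    ring

theorem snoc_mem_cyclicSeqs_iff {k p l c : ℕ} {w : Fin k → ℕ} :
    (Fin.snoc w (c + p) : Fin (k + 1) → ℕ) ∈ cyclicSeqs (k + 1) p l ↔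
      (Fin.cons c w : Fin (k + 1) → ℕ) ∈ cyclicSeqs (k + 1) p l ∧ c < l := by
  conv_lhs => simp only [mem_cyclicSeqs, monotone_snoc_iff, Fin.forall_fin_succ',
    Fin.snoc_castSucc, Fin.snoc_last]
  conv_rhs => simp only [mem_cyclicSeqs, monotone_cons_iff, Fin.forall_fin_succ, Fin.cons_zero,
    Fin.cons_succ]
  grind

theorem sum_cyclicSeqs_rotate {β : Type*} [AddCommMonoid β] (k p l : ℕ)
    (f : (Fin (k + 1) → ℕ) → β) :
    ∑ z ∈ cyclicSeqs (k + 1) p l with z 0 < l, f (Fin.snoc (Fin.tail z) (z 0 + p)) =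
      ∑ z ∈ cyclicSeqs (k + 1) p l with p ≤ z (Fin.last k), f z := by
  refine sum_nbij' (fun z => Fin.snoc (Fin.tail z) (z 0 + p))
    (fun z => Fin.cons (z (Fin.last k) - p) (Fin.init z)) ?_ ?_ ?_ ?_ fun _ _ => rfl
  · intro z hz
    rw [mem_filter] at hz ⊢
    rw [snoc_mem_cyclicSeqs_iff, Fin.cons_self_tail]
    simpa using hz
  · intro z hz
    obtain ⟨hz, hp⟩ := mem_filter.1 hz
    rw [mem_filter, Fin.cons_zero, ← snoc_mem_cyclicSeqs_iff, Nat.sub_add_cancel hp,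
      Fin.snoc_init_self]
    exact hz
  · intro z _
    simp
  · intro z hz
    simp [Nat.sub_add_cancel (mem_filter.1 hz).2]

theorem sum_cyclicSeqs_telescope {R : Type*} [CommRing R] (t : R) (k p l M : ℕ) :
    ∑ z ∈ cyclicSeqs (k + 1) p l, t ^ (∑ i, z i + M * (z (Fin.last k) - p)) -
        ∑ z ∈ cyclicSeqs (k + 1) p l, t ^ (∑ i, z i + (p + M * min (z 0) l)) =
      (1 - t ^ (p + (M + (k + 1)) * l)) * boxGF t (k + 1) p := by
  have hrot : ∑ z ∈ cyclicSeqs (k + 1) p l with z 0 < l,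
        t ^ (∑ i, z i + (p + M * min (z 0) l)) =
      ∑ z ∈ cyclicSeqs (k + 1) p l with p ≤ z (Fin.last k),
        t ^ (∑ i, z i + M * (z (Fin.last k) - p)) := by
    rw [← sum_cyclicSeqs_rotate]
    refine sum_congr rfl fun z hz => ?_
    rw [min_eq_left (mem_filter.1 hz).2.le, Fin.sum_univ_succ, Fin.sum_univ_castSucc]
    simp only [Fin.snoc_castSucc, Fin.snoc_last, Fin.tail, Nat.add_sub_cancel]
    ring
  have hlow : ∑ z ∈ cyclicSeqs (k + 1) p l with ¬ p ≤ z (Fin.last k),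
      t ^ (∑ i, z i + M * (z (Fin.last k) - p)) = boxGF t (k + 1) p := by
    rw [filter_last_lt_cyclicSeqs, boxGF]
    refine sum_congr rfl fun z hz => ?_
    rw [Nat.sub_eq_zero_of_le ((mem_monoSeqs.1 hz).1 _).2.le, mul_zero, add_zero]
  have hhigh : ∑ z ∈ cyclicSeqs (k + 1) p l with ¬ z 0 < l,
      t ^ (∑ i, z i + (p + M * min (z 0) l)) =
        t ^ (p + (M + (k + 1)) * l) * boxGF t (k + 1) p := by
    rw [filter_le_head_cyclicSeqs, add_mul, ← add_assoc, pow_add, mul_assoc, ← sum_monoSeqs_add,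
      mul_sum]
    refine sum_congr rfl fun z hz => ?_
    rw [min_eq_right ((mem_monoSeqs.1 hz).1 0).1]
    ring
  rw [← sum_filter_add_sum_filter_not _ fun z => p ≤ z (Fin.last k),
    ← sum_filter_add_sum_filter_not (cyclicSeqs (k + 1) p l) fun z => z 0 < l, hrot, hlow, hhigh]
  ring

/-- The set `Ω` of the theorem, with `d` as a lower bound for the entries; the theorem is about
`d = 0`, and `d > 0` arises when the last block is fixed. The case `i = j` of the second condition
and the bounds `x i a < p i + l i` together say `x i b ≤ p i + min (x i a) (l i - 1)`. -/
def configs {n : ℕ} (l p m : Fin n → ℕ) (d : ℕ) : Finset ((i : Fin n) → Fin (m i) → ℕ) :=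
  {x ∈ Fintype.piFinset fun i => Fintype.piFinset fun _ => Ico d (p i + l i) |
    (∀ i, Monotone (x i)) ∧ (∀ i j, i ≤ j → ∀ a b, x j b ≤ p j + x i a) ∧
      ∀ i j, i < j → ∀ a b, x i a + l j + 1 ≤ p i + l i + x j b}

theorem mem_configs {n : ℕ} {l p m : Fin n → ℕ} {d : ℕ} {x : (i : Fin n) → Fin (m i) → ℕ} :
    x ∈ configs l p m d ↔ (∀ i a, d ≤ x i a ∧ x i a < p i + l i) ∧
      (∀ i, Monotone (x i)) ∧ (∀ i j, i ≤ j → ∀ a b, x j b ≤ p j + x i a) ∧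
      ∀ i j, i < j → ∀ a b, x i a + l j + 1 ≤ p i + l i + x j b := by
  simp [configs]

theorem sum_configs_add {R : Type*} [CommSemiring R] (t : R) {n : ℕ} (l p m : Fin n → ℕ) (d : ℕ) :
    ∑ x ∈ configs (fun i => l i + d) p m d, t ^ ∑ i, ∑ a, x i a =
      t ^ ((∑ i, m i) * d) * ∑ x ∈ configs l p m 0, t ^ ∑ i, ∑ a, x i a := by
  rw [mul_sum]
  symm
  refine sum_nbij' (fun x i a => x i a + d) (fun x i a => x i a - d) ?_ ?_ ?_ ?_ ?_
  · intro x hx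
    rw [mem_configs] at hx ⊢
    obtain ⟨hb, hmono, hle, hlt⟩ := hx
    refine ⟨fun i a => ?_, fun i a b hab => Nat.add_le_add_right (hmono i hab) d,
      fun i j hij a b => ?_, fun i j hij a b => ?_⟩
    · have := hb i a
      omega
    · have := hle i j hij a b
      omega
    · have := hlt i j hij a b
      omega
  · intro x hx
    rw [mem_configs] at hx ⊢
    obtain ⟨hb, hmono, hle, hlt⟩ := hx
    refine ⟨fun i a => ?_, fun i a b hab => Nat.sub_le_sub_right (hmono i hab) d,
      fun i j hij a b => ?_, fun i j hij a b => ?_⟩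
    · have := hb i a
      omega
    · have := hle i j hij a b
      have := (hb i a).1
      omega
    · have := hlt i j hij a b
      have := hb i a
      have := (hb j b).1
      omega
  · intro x _
    simp
  · intro x hx
    funext i a
    exact Nat.sub_add_cancel ((mem_configs.1 hx).1 i a).1
  · intro x _
    simp only [sum_add_distrib, sum_const, card_univ, Fintype.card_fin, smul_eq_mul, sum_mul]
    rw [← pow_add, add_comm]

theorem snoc_mem_configs_iff {n : ℕ} {l p m : Fin (n + 1) → ℕ}
    {y : (i : Fin n) → Fin (m i.castSucc) → ℕ} {z : Fin (m (Fin.last n)) → ℕ} :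
    (Fin.snoc y z : (i : Fin (n + 1)) → Fin (m i) → ℕ) ∈ configs l p m 0 ↔
      y ∈ configs (fun i => l i.castSucc) (fun i => p i.castSucc) (fun i => m i.castSucc) 0 ∧
      z ∈ cyclicSeqs (m (Fin.last n)) (p (Fin.last n)) (l (Fin.last n)) ∧
      ∀ i a b, z b ≤ p (Fin.last n) + y i a ∧
        y i a + l (Fin.last n) + 1 ≤ p i.castSucc + l i.castSucc + z b := by
  simp only [mem_configs, mem_cyclicSeqs, Fin.forall_fin_succ', Fin.snoc_castSucc, Fin.snoc_last,
    Fin.castSucc_le_castSucc_iff, Fin.castSucc_lt_castSucc_iff, Fin.castSucc_lt_last, Fin.le_last,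
    (Fin.castSucc_lt_last _).not_ge, (Fin.castSucc_lt_last _).not_gt, lt_irrefl,
    IsEmpty.forall_iff, forall_and, Nat.zero_le, implies_true, true_and, and_true, forall_const]
  rw [forall_comm (p := fun a b => z a ≤ p (Fin.last n) + z b)]
  tauto

theorem snoc_mem_configs_iff_shift {n : ℕ} {l k p : Fin (n + 1) → ℕ}
    (hl : ∀ i : Fin n, l (Fin.last n) ≤ l i.castSucc)
    {y : (i : Fin n) → Fin (k i.castSucc + 1) → ℕ} {z : Fin (k (Fin.last n) + 1) → ℕ} :
    (Fin.snoc y z : (i : Fin (n + 1)) → Fin (k i + 1) → ℕ) ∈ configs l p (fun i => k i + 1) 0 ↔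
      z ∈ cyclicSeqs (k (Fin.last n) + 1) (p (Fin.last n)) (l (Fin.last n)) ∧
      y ∈ configs (fun i => l i.castSucc - l (Fin.last n) + min (z 0) (l (Fin.last n)))
        (fun i => p i.castSucc) (fun i => k i.castSucc + 1)
        (z (Fin.last _) - p (Fin.last n)) := by
  rw [snoc_mem_configs_iff (m := fun i => k i + 1), and_left_comm]
  refine and_congr_right fun hz => ?_
  simp only [mem_configs]
  have hzmono := (mem_cyclicSeqs.1 hz).2.1
  constructor
  · rintro ⟨⟨hy, hmono, hle, hlt⟩, hyz⟩
    refine ⟨fun i a => ?_, hmono, hle, fun i j hij a b => ?_⟩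
    · have := hyz i a 0
      have := hyz i a (Fin.last _)
      have := hy i a
      have := hl i
      omega
    · have := hlt i j hij a b
      have := hl i
      have := hl j
      omega
  · rintro ⟨hy, hmono, hle, hlt⟩
    refine ⟨⟨fun i a => ?_, hmono, hle, fun i j hij a b => ?_⟩, fun i a b => ?_⟩
    · have := hy i a
      have := hl i
      omega
    · have := hlt i j hij a b
      have := hl i
      have := hl j
      omega
    · have := hy i a
      have := hl i
      have := hzmono (Fin.zero_le b)
      have := hzmono (Fin.le_last b)
      omega

theorem sum_configs_succ {β : Type*} [AddCommMonoid β] {n : ℕ} (l k p : Fin (n + 1) → ℕ)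
    (hl : ∀ i : Fin n, l (Fin.last n) ≤ l i.castSucc)
    (f : ((i : Fin (n + 1)) → Fin (k i + 1) → ℕ) → β) :
    ∑ x ∈ configs l p (fun i => k i + 1) 0, f x =
      ∑ z ∈ cyclicSeqs (k (Fin.last n) + 1) (p (Fin.last n)) (l (Fin.last n)),
        ∑ y ∈ configs (fun i => l i.castSucc - l (Fin.last n) + min (z 0) (l (Fin.last n)))
            (fun i => p i.castSucc) (fun i => k i.castSucc + 1) (z (Fin.last _) - p (Fin.last n)),
          f (Fin.snoc y z) := by
  rw [sum_sigma']
  refine sum_nbij' (fun x => ⟨x (Fin.last n), Fin.init x⟩) (fun w => Fin.snoc w.2 w.1)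
    ?_ ?_ ?_ ?_ ?_
  · intro x hx
    rwa [mem_sigma, ← snoc_mem_configs_iff_shift hl, Fin.snoc_init_self]
  · intro w hw
    rw [snoc_mem_configs_iff_shift hl]
    exact mem_sigma.1 hw
  · intro x _
    exact Fin.snoc_init_self x
  · intro w _
    simp
  · intro x _
    rw [Fin.snoc_init_self]

theorem sum_Iic_castSucc {β : Type*} [AddCommMonoid β] {n : ℕ} (f : Fin (n + 1) → β) (i : Fin n) :
    ∑ j ∈ Iic i.castSucc, f j = ∑ j ∈ Iic i, f j.castSucc := by
  rw [← Fin.map_castSuccEmb_Iic, sum_map]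
  rfl

section CommRing

variable {R : Type*} [CommRing R] {t c G : R}

theorem mul_sum_configs_of_forall_add {n : ℕ} {l p m : Fin n → ℕ} {N : ℕ}
    (h : ∀ e, c * ∑ x ∈ configs (fun i => l i + e) p m 0, t ^ ∑ i, ∑ a, x i a =
      (1 - t ^ (N + (∑ i, m i) * e)) * G)
    {d e : ℕ} (hde : d ≤ e) :
    c * ∑ x ∈ configs (fun i => l i + e) p m d, t ^ ∑ i, ∑ a, x i a =
      (t ^ ((∑ i, m i) * d) - t ^ (N + (∑ i, m i) * e)) * G := by
  obtain ⟨b, rfl⟩ := Nat.exists_eq_add_of_le' hde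
  have htranslate := sum_configs_add t (fun i => l i + b) p m d
  simp only [add_assoc] at htranslate
  rw [htranslate]
  linear_combination t ^ ((∑ i, m i) * d) * h b

theorem mul_sum_configs_succ_of_forall_add {n : ℕ} {l k p : Fin (n + 1) → ℕ}
    (hl : ∀ i : Fin n, l (Fin.last n) ≤ l i.castSucc)
    (h : ∀ e, c * ∑ x ∈ configs (fun i : Fin n => l i.castSucc - l (Fin.last n) + e)
        (fun i => p i.castSucc) (fun i => k i.castSucc + 1) 0, t ^ ∑ i, ∑ a, x i a =
      (1 - t ^ (p (Fin.last n) + (∑ i : Fin n, (k i.castSucc + 1)) * e)) * G) :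
    c * ∑ x ∈ configs l p (fun i => k i + 1) 0, t ^ ∑ i, ∑ a, x i a =
      (1 - t ^ (p (Fin.last n) + (∑ i, (k i + 1)) * l (Fin.last n))) *
        (G * boxGF t (k (Fin.last n) + 1) (p (Fin.last n))) := by
  rw [sum_configs_succ l k p hl, mul_sum, Fin.sum_univ_castSucc, mul_left_comm,
    ← sum_cyclicSeqs_telescope, ← sum_sub_distrib, mul_sum]
  refine sum_congr rfl fun z hz => ?_
  have hz_le : z (Fin.last _) - p (Fin.last n) ≤ min (z 0) (l (Fin.last n)) := by
    obtain ⟨hz_lt, -, hz_le⟩ := mem_cyclicSeqs.1 hz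
    have := hz_lt (Fin.last _)
    have := hz_le (Fin.last _) 0
    omega
  simp only [Fin.sum_univ_castSucc (n := n), Fin.snoc_castSucc, Fin.snoc_last,
    pow_add _ (∑ _ : Fin n, _)]
  rw [← sum_mul, ← mul_assoc, mul_sum_configs_of_forall_add h hz_le]
  ring

theorem sum_configs (t : R) {n : ℕ} (l k p : Fin (n + 1) → ℕ) (hl : Antitone l)
    (hp : ∀ i : Fin n, p i.succ =
      p i.castSucc + (∑ j ∈ Iic i.castSucc, (k j + 1)) * (l i.castSucc - l i.succ)) :
    (1 - t ^ (k 0 + 1)) * ∑ x ∈ configs l p (fun i => k i + 1) 0, t ^ ∑ i, ∑ a, x i a =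
      (1 - t ^ (p (Fin.last n) + (∑ i, (k i + 1)) * l (Fin.last n))) *
        (boxGF t (k 0) (p 0 + 1) * ∏ i : Fin n, boxGF t (k i.succ + 1) (p i.succ)) := by
  induction n with
  | zero =>
    have hconfigs (l p m : Fin 0 → ℕ) (d : ℕ) : configs l p m d = univ := by simp [configs]
    rw [sum_configs_succ l k p (Fin.elim0 ·)]
    simpa [hconfigs, Fin.snoc] using sum_cyclicSeqs t (k 0) (p 0) (l 0)
  | succ n ih =>
    rw [Fin.prod_univ_castSucc, Fin.succ_last, ← mul_assoc (boxGF _ _ _)]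
    refine mul_sum_configs_succ_of_forall_add (fun _ => hl (Fin.le_last _)) fun e => ?_
    have hlast : p (Fin.last (n + 1)) + (∑ i : Fin (n + 1), (k i.castSucc + 1)) * e =
        p (Fin.last n).castSucc + (∑ i : Fin (n + 1), (k i.castSucc + 1)) *
          (l (Fin.last n).castSucc - l (Fin.last (n + 1)) + e) := by
      rw [← Fin.succ_last, hp, sum_Iic_castSucc, ← Fin.top_eq_last, Iic_top, mul_add, add_assoc]
    rw [hlast]
    refine ih (fun i => l i.castSucc - l (Fin.last (n + 1)) + e) (fun i => k i.castSucc)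
      (fun i => p i.castSucc) (fun _ _ hij => ?_) fun i => ?_
    · have := hl (Fin.castSucc_le_castSucc_iff.2 hij)
      dsimp only
      omega
    · have := hl (Fin.le_last i.succ.castSucc)
      rw [← Fin.succ_castSucc, hp, sum_Iic_castSucc, Fin.succ_castSucc]
      congr 2
      omega

end CommRing

theorem one_sub_q_pow_ne_zero (n : ℕ) : 1 - q ^ (n + 1) ≠ 0 := by
  have hX : (1 : Polynomial ℚ) - Polynomial.X ^ (n + 1) ≠ 0 := fun h => by
    simpa using congrArg (Polynomial.eval 0) h
  simpa [q, RatFunc.algebraMap_X] using RatFunc.algebraMap_ne_zero hX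

theorem qInt_div_qInt (n m : ℕ) : qInt n / qInt m = (1 - q ^ n) / (1 - q ^ m) := by
  have hq : 1 - q ≠ 0 := by simpa using one_sub_q_pow_ne_zero 0
  rw [← mul_div_mul_right _ _ hq, qInt, qInt, geom_sum_mul_neg, geom_sum_mul_neg]

theorem qPoch_succ (n : ℕ) : qPoch (n + 1) = qPoch n * (1 - q ^ (n + 1)) :=
  prod_range_succ _ n

theorem qPoch_ne_zero (n : ℕ) : qPoch n ≠ 0 :=
  prod_ne_zero_iff.2 fun i _ => one_sub_q_pow_ne_zero i

theorem boxGF_q_succ (k p : ℕ) : boxGF q k (p + 1) = qb (p + k) k := by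
  rw [qb, Nat.add_sub_cancel]
  induction k generalizing p with
  | zero =>
    rw [boxGF_zero_left, eq_div_iff (mul_ne_zero (qPoch_ne_zero _) (qPoch_ne_zero _))]
    simp [qPoch]
  | succ k ih =>
    apply mul_left_cancel₀ (one_sub_q_pow_ne_zero k)
    rw [one_sub_pow_mul_boxGF, ih (p + 1), qPoch_succ k, qPoch_succ p, add_right_comm]
    have := one_sub_q_pow_ne_zero k
    have := one_sub_q_pow_ne_zero p
    have := qPoch_ne_zero k
    have := qPoch_ne_zero p
    field_simp
    rfl

theorem boxGF_q {p : ℕ} (hp : 0 < p) (k : ℕ) : boxGF q k p = qb (p + k - 1) k := by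
  obtain ⟨p, rfl⟩ := Nat.exists_eq_add_of_le' hp
  rw [boxGF_q_succ, add_right_comm, Nat.add_sub_cancel]

theorem sum_filter_val_mem {ι : Type*} [Fintype ι] [DecidableEq ι] {κ : ι → Type*}
    [∀ i, Fintype (κ i)] [∀ i, DecidableEq (κ i)] {β : Type*} [AddCommMonoid β] {P : ℕ}
    {S : Finset ((i : ι) → κ i → ℕ)} (hS : ∀ x ∈ S, ∀ i a, x i a < P)
    (f : ((i : ι) → κ i → ℕ) → β) :
    ∑ x : (i : ι) → κ i → Fin P with (fun i a => (x i a : ℕ)) ∈ S, f (fun i a => x i a) =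
      ∑ x ∈ S, f x := by
  refine sum_nbij (fun x i a => (x i a : ℕ)) (fun x hx => (mem_filter.1 hx).2) ?_ ?_
    fun _ _ => rfl
  · intro x _ y _ hxy
    funext i a
    exact Fin.ext (congrFun (congrFun hxy i) a)
  · intro x hx
    exact ⟨fun i a => ⟨x i a, hS x hx i a⟩, by simpa using hx, rfl⟩

theorem val_mem_configs_iff {n : ℕ} {l p m : Fin n → ℕ} (hl : ∀ i, 0 < l i) {P : ℕ}
    {x : (i : Fin n) → Fin (m i) → Fin P} :
    (fun i a => (x i a : ℕ)) ∈ configs l p m 0 ↔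
      (∀ i, ∀ a b, a ≤ b → x i a ≤ x i b) ∧
      (∀ i, ∀ a b, (x i a : ℕ) ≤ p i + min (x i b : ℕ) (l i - 1)) ∧
      (∀ i j, i < j → ∀ a b, (x j b : ℕ) ≤ p j + x i a) ∧
      ∀ i j, i < j → ∀ a b, (x i a : ℕ) + l j + 1 ≤ p i + l i + x j b := by
  rw [mem_configs]
  constructor
  · rintro ⟨hb, hmono, hle, hlt⟩
    refine ⟨fun i a b hab => hmono i hab, fun i a b => ?_, fun i j hij => hle i j hij.le, hlt⟩
    have := hb i a
    have := hle i i le_rfl b a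
    omega
  · rintro ⟨hmono, hb, hle, hlt⟩
    refine ⟨fun i a => ?_, fun i a b hab => hmono i a b hab, fun i j hij => ?_, hlt⟩
    · have := hb i a a
      have := hl i
      omega
    · obtain rfl | hij := hij.eq_or_lt
      · intro a b
        have := hb i b a
        omega
      · exact hle i j hij

theorem sum_Iic_add_one_pos {n : ℕ} (k : Fin n → ℕ) (i : Fin n) : 0 < ∑ j ∈ Iic i, (k j + 1) :=
  sum_pos (fun _ _ => Nat.succ_pos _) nonempty_Iic

theorem succ_pos_of_rec {n : ℕ} {l k p : Fin (n + 1) → ℕ} (hl : StrictAnti l)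
    (hp : ∀ i : Fin n, p i.succ =
      p i.castSucc + (∑ j ∈ Iic i.castSucc, (k j + 1)) * (l i.castSucc - l i.succ))
    (i : Fin n) : 0 < p i.succ := by
  rw [hp]
  exact Nat.add_pos_right _
    (Nat.mul_pos (sum_Iic_add_one_pos k _) (Nat.sub_pos_of_lt (hl i.castSucc_lt_succ)))

theorem add_le_last_of_rec {n : ℕ} {l k p : Fin (n + 1) → ℕ}
    (hp : ∀ i : Fin n, p i.succ =
      p i.castSucc + (∑ j ∈ Iic i.castSucc, (k j + 1)) * (l i.castSucc - l i.succ))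
    (i : Fin (n + 1)) :
    p i + l i ≤ p (Fin.last n) + (∑ j, (k j + 1)) * l (Fin.last n) := by
  have hmono : Monotone fun i => p i + l i := by
    refine Fin.monotone_iff_le_succ.2 fun i => ?_
    have := hp i
    have := Nat.le_mul_of_pos_left (l i.castSucc - l i.succ) (sum_Iic_add_one_pos k i.castSucc)
    omega
  have hpos : 0 < ∑ j, (k j + 1) := sum_pos (fun _ _ => Nat.succ_pos _) univ_nonempty
  calc p i + l i ≤ p (Fin.last n) + l (Fin.last n) := hmono (Fin.le_last i)
    _ ≤ _ := Nat.add_le_add_left (Nat.le_mul_of_pos_left _ hpos) _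

theorem stmt14 (s : ℕ) (hs : 0 < s) (l m : Fin s → ℕ)
    (hlpos : ∀ i, 0 < l i) (hmpos : ∀ i, 0 < m i)
    (hdec : ∀ i j : Fin s, i < j → l j < l i)
    (p : Fin s → ℕ)
    (hrec : ∀ i j : Fin s, (j : ℕ) = (i : ℕ) + 1 →
      p j = p i + (∑ k ∈ Finset.univ.filter (fun k : Fin s => k ≤ i), m k) * (l i - l j))
    (P : ℕ) (hP : P = p ⟨s - 1, by omega⟩ + (∑ i, m i) * l ⟨s - 1, by omega⟩) :
    ∑ x ∈ (Finset.univ : Finset ((i : Fin s) → Fin (m i) → Fin P)).filter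
        (fun x =>
          (∀ i : Fin s, ∀ j k : Fin (m i), j ≤ k → x i j ≤ x i k) ∧
          (∀ i : Fin s, ∀ j k : Fin (m i),
            (x i j).val ≤ p i + min (x i k).val (l i - 1)) ∧
          (∀ i j : Fin s, i < j → ∀ a : Fin (m i), ∀ b : Fin (m j),
            (x j b).val ≤ p j + (x i a).val) ∧
          (∀ i j : Fin s, i < j → ∀ a : Fin (m i), ∀ b : Fin (m j),
            (x i a).val + l j + 1 ≤ p i + l i + (x j b).val)),
      q ^ (∑ i, ∑ k, (x i k : ℕ)) =
    qInt P / qInt (m ⟨0, hs⟩) *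
      qb (p ⟨0, hs⟩ + m ⟨0, hs⟩ - 1) (m ⟨0, hs⟩ - 1) *
      ∏ i ∈ Finset.univ.filter (fun i : Fin s => 0 < (i : ℕ)),
        qb (p i + m i - 1) (m i) := by
  obtain ⟨n, rfl⟩ := Nat.exists_eq_add_one_of_ne_zero hs.ne'
  obtain ⟨k, rfl⟩ : ∃ k : Fin (n + 1) → ℕ, m = fun i => k i + 1 :=
    ⟨fun i => m i - 1, funext fun i => (Nat.sub_add_cancel (hmpos i)).symm⟩
  have hl : StrictAnti l := fun i j => hdec i j
  have hp (i : Fin n) : p i.succ =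
      p i.castSucc + (∑ j ∈ Iic i.castSucc, (k j + 1)) * (l i.castSucc - l i.succ) := by
    rw [hrec i.castSucc i.succ rfl, filter_ge_eq_Iic]
  have hlt : ∀ x ∈ configs l p (fun i => k i + 1) 0, ∀ i a, x i a < P := fun x hx i a =>
    ((mem_configs.1 hx).1 i a).2.trans_le (hP ▸ add_le_last_of_rec hp i)
  have hprod : ∏ i with 0 < (i : Fin (n + 1)).val, qb (p i + (k i + 1) - 1) (k i + 1) =
      ∏ i : Fin n, boxGF q (k i.succ + 1) (p i.succ) := by
    simp [prod_filter, Fin.prod_univ_succ, boxGF_q (succ_pos_of_rec hl hp _)]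
  simp only [← val_mem_configs_iff hlpos]
  rw [sum_filter_val_mem hlt fun x => q ^ ∑ i, ∑ a, x i a, hprod, mul_assoc, qInt_div_qInt,
    div_mul_eq_mul_div, eq_div_iff (one_sub_q_pow_ne_zero _), mul_comm]
  have hmain := sum_configs q l k p hl.antitone hp
  rw [boxGF_q_succ] at hmain
  rw [hP]
  exact hmain
end

section
/- Counting formula at q = 1 for the periodic level set: with the data of the periodic fermionic factorization (l_1 > ... > l_s, multiplicities m_i, p_1 ≥ 0, p_i defined recursively, p_{s+1} = p_s + (Σ m_i) l_s), the cardinality of Ω_s equals (p_{s+1}/m_1) · binom(p_1+m_1−1, m_1−1) · ∏_{i=2}^s binom(p_i+m_i−1, m_i). -/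
open Finset

/- Write `z` for the last block, `x` for the preceding blocks and `c` for `l_s`, and compare the
first entry `k` of `z` with `c` and with the entries of `x`.

* If `k < c` and no entry of `x` is below `k`, subtract `k` from every entry. The last block becomes
  any weakly increasing tuple in `[0, p_s]` starting at `0`, and the preceding blocks become any
  point of the level set with lengths `l_i - c`; there are `c` choices of `k`.
* Otherwise `z` is any weakly increasing tuple in the interval of `p_s` integers starting at
  `min (c, min x + 1)`, and `x` is any point of the level set of the preceding blocks.

The recursion `p_{i+1} = p_i + (m_1 + ... + m_i) (l_i - l_{i+1})` says that
`p_i + ∑_k m_k min (l_i, l_k)` is the same number `P` for all `i`. Both reductions preserve this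
form of the data, with `P` replaced by `p_s` and by `p_s + (m_1 + ... + m_{s-1}) c` respectively,
so the formula follows by induction on `s`. -/

section MonotoneTuples

/-- The weakly increasing `n`-tuples of natural numbers below `p`, the possible contents of a single
block. -/
def monotoneTuples (n p : ℕ) : Set (Fin n → ℕ) :=
  {z | Monotone z ∧ ∀ i, z i < p}

lemma finite_monotoneTuples (n p : ℕ) : (monotoneTuples n p).Finite :=
  (Set.finite_Iic fun _ => p).subset fun _ hz i => (hz.2 i).le

lemma monotone_cons_zero {n : ℕ} {z : Fin n → ℕ} :
    Monotone (Fin.cons 0 z : Fin (n + 1) → ℕ) ↔ Monotone z := by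
  simp [Monotone, Fin.forall_fin_succ]

lemma monotoneTuples_inter_head_eq_zero (n p : ℕ) :
    monotoneTuples (n + 1) (p + 1) ∩ {z | z 0 = 0} =
      (fun z => (Fin.cons 0 z : Fin (n + 1) → ℕ)) '' monotoneTuples n (p + 1) := by
  ext z
  constructor
  · induction z using Fin.consCases with
    | cons k z =>
      rintro ⟨⟨hmono, hlt⟩, rfl⟩
      exact ⟨z, ⟨monotone_cons_zero.1 hmono, fun i => hlt i.succ⟩, rfl⟩
  · rintro ⟨z, ⟨hmono, hlt⟩, rfl⟩
    exact ⟨⟨monotone_cons_zero.2 hmono, Fin.forall_fin_succ.2 ⟨p.succ_pos, hlt⟩⟩, rfl⟩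

lemma ncard_monotoneTuples_succ_inter_head_eq_zero (n p : ℕ) :
    (monotoneTuples (n + 1) (p + 1) ∩ {z | z 0 = 0}).ncard = (monotoneTuples n (p + 1)).ncard := by
  rw [monotoneTuples_inter_head_eq_zero]
  exact Set.ncard_image_of_injective _ (Fin.cons_right_injective (α := fun _ => ℕ) 0)

lemma monotoneTuples_sdiff_head_eq_zero (n p : ℕ) :
    monotoneTuples (n + 1) (p + 1) \ {z | z 0 = 0} =
      (fun z i => z i + 1) '' monotoneTuples (n + 1) p := by
  ext z
  constructor
  · rintro ⟨⟨hmono, hlt⟩, hhead⟩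
    have hpos (i) : 1 ≤ z i := (Nat.pos_of_ne_zero hhead).trans_le (hmono i.zero_le)
    exact ⟨fun i => z i - 1, ⟨fun i j hij => Nat.sub_le_sub_right (hmono hij) 1,
      fun i => (Nat.sub_lt_iff_lt_add (hpos i)).2 (hlt i)⟩,
      funext fun i => Nat.sub_add_cancel (hpos i)⟩
  · rintro ⟨z, ⟨hmono, hlt⟩, rfl⟩
    exact ⟨⟨fun i j hij => Nat.add_le_add_right (hmono hij) 1,
      fun i => Nat.add_lt_add_right (hlt i) 1⟩, Nat.succ_ne_zero _⟩

lemma ncard_monotoneTuples (n p : ℕ) : (monotoneTuples n p).ncard = p.multichoose n := by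
  induction n generalizing p with
  | zero =>
    have huniv : monotoneTuples 0 p = Set.univ :=
      Set.eq_univ_of_forall fun z => ⟨Subsingleton.monotone z, fun i => i.elim0⟩
    simp [huniv]
  | succ n ihn =>
    induction p with
    | zero => simp [monotoneTuples]
    | succ p ihp =>
      have hinj : Function.Injective fun (z : Fin (n + 1) → ℕ) i => z i + 1 :=
        fun _ _ h => funext fun i => Nat.add_right_cancel (congrFun h i)
      rw [← Set.ncard_inter_add_ncard_sdiff_eq_ncard _ {z | z 0 = 0} (finite_monotoneTuples _ _),
        ncard_monotoneTuples_succ_inter_head_eq_zero, ihn, monotoneTuples_sdiff_head_eq_zero,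
        Set.ncard_image_of_injective _ hinj, ihp, Nat.multichoose_succ_succ, add_comm]

lemma ncard_monotoneTuples_inter_head_eq_zero (n p : ℕ) [NeZero n] :
    (monotoneTuples n (p + 1) ∩ {z | z 0 = 0}).ncard = (p + 1).multichoose (n - 1) := by
  obtain ⟨n, rfl⟩ := Nat.exists_eq_succ_of_ne_zero (NeZero.ne n)
  rw [← ncard_monotoneTuples]
  exact ncard_monotoneTuples_succ_inter_head_eq_zero n p

end MonotoneTuples

section LevelSet

/-- The points `(x_{i,j})` of the ambient space of the level set: one `m i`-tuple of natural numbers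
for each block `i`. -/
abbrev BlockFamily {s : ℕ} (m : Fin s → ℕ) : Type :=
  (i : Fin s) → Fin (m i) → ℕ

/-- The families satisfying those constraints of the periodic level set that are invariant under
adding a constant to all entries. -/
def interlacingFamilies {s : ℕ} (l m p : Fin s → ℕ) : Set (BlockFamily m) :=
  {x | (∀ i, Monotone (x i)) ∧
    (∀ i a b, x i a ≤ p i + x i b) ∧
    (∀ i j, i < j → ∀ a b, x j b ≤ p j + x i a) ∧
    (∀ i j, i < j → ∀ a b, x i a + l j < p i + l i + x j b)}

/-- The periodic level set `Ω_s`. The bound `x_{i,m_i} ≤ p_i + min (x_{i,1}, l_i - 1)` is split into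
its translation invariant half, in `interlacingFamilies`, and the absolute bound below. -/
def levelSet {s : ℕ} (l m p : Fin s → ℕ) : Set (BlockFamily m) :=
  {x ∈ interlacingFamilies l m p | ∀ i a, x i a < p i + l i}

variable {s : ℕ}

lemma finite_levelSet (l m p : Fin s → ℕ) : (levelSet l m p).Finite :=
  (Set.finite_Iic fun i _ => p i + l i).subset fun _ hx i a => (hx.2 i a).le

lemma ncard_levelSet_zero (l m p : Fin 0 → ℕ) : (levelSet l m p).ncard = 1 := by
  have huniv : levelSet l m p = Set.univ := by simp [levelSet, interlacingFamilies]
  rw [huniv, Set.ncard_univ, Nat.card_unique]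

lemma add_const_mem_interlacingFamilies {l m p : Fin s → ℕ} {x : BlockFamily m} (k : ℕ) :
    (fun i a => x i a + k) ∈ interlacingFamilies l m p ↔ x ∈ interlacingFamilies l m p := by
  simp only [interlacingFamilies, Set.mem_ofPred_eq, Monotone, ← add_assoc, add_le_add_iff_right,
    add_right_comm _ k, add_lt_add_iff_right]

lemma interlacingFamilies_sub_const {l m p : Fin s → ℕ} {c : ℕ} (hc : ∀ i, c ≤ l i) :
    interlacingFamilies (fun i => l i - c) m p = interlacingFamilies l m p := by
  have hshift (i j : Fin s) (u v : ℕ) :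
      u + (l j - c) < p i + (l i - c) + v ↔ u + l j < p i + l i + v := by
    have := hc i
    have := hc j
    omega
  simp only [interlacingFamilies, hshift]

lemma add_le_of_mem_interlacingFamilies {l m p : Fin s → ℕ} {c : ℕ} (hc : ∀ i, c ≤ l i)
    {x : BlockFamily m} (hx : x ∈ interlacingFamilies l m p) (i j : Fin s) (a : Fin (m i))
    (b : Fin (m j)) : x i a + c ≤ p i + l i + x j b := by
  obtain ⟨-, hself, hlower, hupper⟩ := hx
  rcases lt_trichotomy i j with hij | rfl | hji
  · have := hupper i j hij a b
    have := hc j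
    omega
  · have := hself i a b
    have := hc i
    omega
  · have := hlower j i hji b a
    have := hc i
    omega

lemma mem_levelSet_iff_le_add_min {l m p : Fin s → ℕ} (hl : ∀ i, 0 < l i) {x : BlockFamily m} :
    x ∈ levelSet l m p ↔
      (∀ i, Monotone (x i)) ∧
      (∀ i a b, x i a ≤ p i + min (x i b) (l i - 1)) ∧
      (∀ i j, i < j → ∀ a b, x j b ≤ p j + x i a) ∧
      (∀ i j, i < j → ∀ a b, x i a + l j + 1 ≤ p i + l i + x j b) := by
  have hmin (i) : (∀ a b, x i a ≤ p i + min (x i b) (l i - 1)) ↔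
      (∀ a b, x i a ≤ p i + x i b) ∧ ∀ a, x i a < p i + l i := by
    have hpred (n : ℕ) : n ≤ p i + (l i - 1) ↔ n < p i + l i := by
      have := hl i
      omega
    simp only [← min_add_add_left, le_min_iff, hpred, forall_and]
    exact and_congr_right fun _ => ⟨fun h a => h a a, fun h a _ => h a⟩
  simp only [levelSet, interlacingFamilies, Set.mem_ofPred_eq, hmin, forall_and,
    Nat.succ_le_iff]
  tauto

lemma card_filter_fin_eq_ncard {m : Fin s → ℕ} {P : ℕ} {S : Set (BlockFamily m)}
    (hS : ∀ x ∈ S, ∀ i a, x i a < P) (r : ((i : Fin s) → Fin (m i) → Fin P) → Prop)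
    [DecidablePred r] (hr : ∀ x, r x ↔ (fun i a => (x i a : ℕ)) ∈ S) :
    (univ.filter r).card = S.ncard := by
  have hval : Function.Injective
      fun (x : (i : Fin s) → Fin (m i) → Fin P) i a => (x i a : ℕ) :=
    fun x y h => funext₂ fun i a => Fin.ext (congrFun₂ h i a)
  rw [← Set.ncard_coe_finset, ← Set.ncard_image_of_injective _ hval]
  congr 1
  ext y
  constructor
  · rintro ⟨x, hx, rfl⟩
    exact (hr x).1 (mem_filter.1 hx).2
  · exact fun hy => ⟨fun i a => ⟨y i a, hS y hy i a⟩,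
      mem_filter.2 ⟨mem_univ _, (hr _).2 hy⟩, rfl⟩

/-- The smaller of `c` and the least number exceeding some entry of `x`. The next block starts below
it exactly when the whole family can be translated so that this block starts at `0`. -/
def threshold {m : Fin s → ℕ} (c : ℕ) (x : BlockFamily m) : ℕ :=
  (univ : Finset (Σ i, Fin (m i))).fold min c fun q => x q.1 q.2 + 1

lemma lt_threshold_iff {m : Fin s → ℕ} {c n : ℕ} {x : BlockFamily m} :
    n < threshold c x ↔ n < c ∧ ∀ i a, n ≤ x i a := by
  simp [threshold, lt_fold_min, Sigma.forall]

lemma lt_add_threshold_iff {m : Fin s → ℕ} {c n q : ℕ} {x : BlockFamily m} :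
    n < q + threshold c x ↔ n < q + c ∧ ∀ i a, n ≤ q + x i a := by
  rcases lt_or_ge n q with hn | hn
  · exact iff_of_true (by omega) ⟨by omega, fun _ _ => by omega⟩
  · obtain ⟨r, rfl⟩ := Nat.exists_eq_add_of_le hn
    simp only [add_lt_add_iff_left, add_le_add_iff_left, lt_threshold_iff]

end LevelSet

section LastBlock

variable {s : ℕ} {l m p : Fin (s + 1) → ℕ}

lemma snoc_mem_interlacingFamilies {x : BlockFamily (m ∘ Fin.castSucc)}
    {z : Fin (m (Fin.last s)) → ℕ} :
    (Fin.snoc x z : BlockFamily m) ∈ interlacingFamilies l m p ↔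
      x ∈ interlacingFamilies (l ∘ Fin.castSucc) (m ∘ Fin.castSucc) (p ∘ Fin.castSucc) ∧
      Monotone z ∧
      (∀ a b, z a ≤ p (Fin.last s) + z b) ∧
      (∀ i a b, z b ≤ p (Fin.last s) + x i a) ∧
      (∀ i a b, x i a + l (Fin.last s) < p i.castSucc + l i.castSucc + z b) := by
  simp only [interlacingFamilies, Set.mem_ofPred_eq, Fin.forall_fin_succ', Fin.snoc_castSucc,
    Fin.snoc_last, Fin.castSucc_lt_castSucc_iff, Fin.castSucc_lt_last, lt_irrefl, forall_const,
    IsEmpty.forall_iff, and_true, forall_and, (Fin.castSucc_lt_last _).not_gt, implies_true,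
    Function.comp_apply]
  tauto

lemma snoc_mem_levelSet {x : BlockFamily (m ∘ Fin.castSucc)} {z : Fin (m (Fin.last s)) → ℕ} :
    (Fin.snoc x z : BlockFamily m) ∈ levelSet l m p ↔
      (Fin.snoc x z : BlockFamily m) ∈ interlacingFamilies l m p ∧
      (∀ (i : Fin s) (a : Fin (m i.castSucc)), x i a < p i.castSucc + l i.castSucc) ∧
      ∀ a, z a < p (Fin.last s) + l (Fin.last s) := by
  simp only [levelSet, Set.mem_ofPred_eq, Fin.forall_fin_succ', Fin.snoc_castSucc, Fin.snoc_last]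

lemma snoc_mem_levelSet_of_threshold_le (hl : ∀ i : Fin s, l (Fin.last s) ≤ l i.castSucc)
    {x : BlockFamily (m ∘ Fin.castSucc)} {z : Fin (m (Fin.last s)) → ℕ}
    (hz : ∀ a, threshold (l (Fin.last s)) x ≤ z a) :
    (Fin.snoc x z : BlockFamily m) ∈ levelSet l m p ↔
      x ∈ levelSet (l ∘ Fin.castSucc) (m ∘ Fin.castSucc) (p ∘ Fin.castSucc) ∧
      Monotone z ∧ ∀ a, z a < p (Fin.last s) + threshold (l (Fin.last s)) x := by
  simp only [snoc_mem_levelSet, snoc_mem_interlacingFamilies, lt_add_threshold_iff]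
  constructor
  · rintro ⟨⟨hx, hmono, -, hlower, -⟩, hxlt, hzlt⟩
    exact ⟨⟨hx, hxlt⟩, hmono, fun a => ⟨hzlt a, fun i b => hlower i b a⟩⟩
  · rintro ⟨⟨hx, hxlt⟩, hmono, hzlt⟩
    refine ⟨⟨hx, hmono, fun a b => ?_, fun i a b => (hzlt b).2 i a, fun i a b => ?_⟩,
      hxlt, fun a => (hzlt a).1⟩
    · exact (lt_add_threshold_iff.2 (hzlt a)).le.trans (Nat.add_le_add_left (hz b) _)
    · have hb := (hz b).not_gt
      simp only [lt_threshold_iff, not_and_or, not_lt, not_forall, not_le] at hb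
      rcases hb with hb | ⟨j, c, hc⟩
      · exact Nat.add_lt_add_of_lt_of_le (hxlt i a) hb
      · exact (add_le_of_mem_interlacingFamilies hl hx i j a c).trans_lt
          (Nat.add_lt_add_left hc _)

/-- Append a block, translated so that it starts at or above `threshold c`. -/
def snocAboveThreshold (c : ℕ)
    (q : BlockFamily (m ∘ Fin.castSucc) × (Fin (m (Fin.last s)) → ℕ)) : BlockFamily m :=
  Fin.snoc q.1 fun a => q.2 a + threshold c q.1

lemma snocAboveThreshold_injective (c : ℕ) :
    Function.Injective (snocAboveThreshold (m := m) c) := by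
  rintro ⟨x, z⟩ ⟨x', z'⟩ h
  obtain ⟨rfl, hz⟩ := Fin.snoc_inj.1 h
  exact congrArg _ (funext fun a => Nat.add_right_cancel (congrFun hz a))

variable [NeZero (m (Fin.last s))]

lemma interlacingFamilies_inter_head_eq_zero (hl : ∀ i : Fin s, l (Fin.last s) ≤ l i.castSucc) :
    interlacingFamilies l m p ∩ {y | y (Fin.last s) 0 = 0} =
      (fun q => (Fin.snoc q.1 q.2 : BlockFamily m)) ''
        (levelSet (fun i => l i.castSucc - l (Fin.last s)) (m ∘ Fin.castSucc)
            (p ∘ Fin.castSucc) ×ˢ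
          (monotoneTuples (m (Fin.last s)) (p (Fin.last s) + 1) ∩ {z | z 0 = 0})) := by
  have hsub := interlacingFamilies_sub_const (m := m ∘ Fin.castSucc) (p := p ∘ Fin.castSucc) hl
  have hlt (i : Fin s) (n : ℕ) : n + l (Fin.last s) < p i.castSucc + l i.castSucc ↔
      n < p i.castSucc + (l i.castSucc - l (Fin.last s)) := by
    have := hl i
    omega
  ext y
  constructor
  · induction y using Fin.snocCases with
    | snoc x z =>
      rintro ⟨hy, hz⟩
      obtain ⟨hx, hmono, hself, -, hupper⟩ := snoc_mem_interlacingFamilies.1 hy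
      replace hz : z 0 = 0 := by simpa using hz
      refine ⟨(x, z), ⟨⟨hsub.ge hx, fun i a => (hlt i _).1 ?_⟩,
        ⟨hmono, fun a => Nat.lt_succ_of_le ?_⟩, hz⟩, rfl⟩
      · simpa [hz] using hupper i a 0
      · simpa [hz] using hself a 0
  · rintro ⟨⟨x, z⟩, ⟨⟨hx, hxlt⟩, ⟨hmono, hle⟩, hz⟩, rfl⟩
    refine ⟨snoc_mem_interlacingFamilies.2 ⟨hsub.le hx, hmono,
      fun a b => Nat.le_add_right_of_le (Nat.le_of_lt_succ (hle a)),
      fun i a b => Nat.le_add_right_of_le (Nat.le_of_lt_succ (hle b)),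
      fun i a b => Nat.lt_add_right _ ((hlt i _).2 (hxlt i a))⟩, ?_⟩
    simpa using hz

lemma ncard_interlacingFamilies_inter_head_eq_zero
    (hl : ∀ i : Fin s, l (Fin.last s) ≤ l i.castSucc) :
    (interlacingFamilies l m p ∩ {y | y (Fin.last s) 0 = 0}).ncard =
      (levelSet (fun i => l i.castSucc - l (Fin.last s)) (m ∘ Fin.castSucc)
          (p ∘ Fin.castSucc)).ncard *
        (p (Fin.last s) + 1).multichoose (m (Fin.last s) - 1) := by
  rw [← ncard_monotoneTuples_inter_head_eq_zero, ← Set.ncard_prod,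
    interlacingFamilies_inter_head_eq_zero hl]
  exact Set.ncard_image_of_injective _ (Fin.snoc_injective2 (α := fun i => Fin (m i) → ℕ)).uncurry

/-- The families whose last block starts below `c` and not above any entry of the preceding blocks,
so that they can be translated to make the last block start at `0`. -/
def lowLastBlock (m : Fin (s + 1) → ℕ) [NeZero (m (Fin.last s))] (c : ℕ) : Set (BlockFamily m) :=
  {y | y (Fin.last s) 0 < threshold c (Fin.init y)}

lemma levelSet_inter_lowLastBlock :
    levelSet l m p ∩ lowLastBlock m (l (Fin.last s)) =
      (fun q i a => q.2 i a + q.1) '' (Set.Iio (l (Fin.last s)) ×ˢ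
        (interlacingFamilies l m p ∩ {y | y (Fin.last s) 0 = 0})) := by
  ext y
  constructor
  · rintro ⟨⟨hy, -⟩, hlow⟩
    obtain ⟨hk, hinit⟩ := lt_threshold_iff.1 hlow
    have hle : ∀ i a, y (Fin.last s) 0 ≤ y i a :=
      Fin.forall_fin_succ'.2 ⟨hinit, fun a => hy.1 _ (Fin.zero_le a)⟩
    have hy' : (fun i a => y i a - y (Fin.last s) 0 + y (Fin.last s) 0) = y :=
      funext₂ fun i a => Nat.sub_add_cancel (hle i a)
    exact ⟨(y (Fin.last s) 0, fun i a => y i a - y (Fin.last s) 0),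
      ⟨hk, (add_const_mem_interlacingFamilies _).1 (hy'.symm ▸ hy), Nat.sub_self _⟩, hy'⟩
  · rintro ⟨⟨k, y⟩, ⟨hk, hy, hhead⟩, rfl⟩
    replace hk : k < l (Fin.last s) := hk
    replace hhead : y (Fin.last s) 0 = 0 := hhead
    refine ⟨⟨(add_const_mem_interlacingFamilies k).2 hy, Fin.forall_fin_succ'.2 ⟨fun i a => ?_,
      fun a => ?_⟩⟩, lt_threshold_iff.2 ⟨?_, fun i a => ?_⟩⟩
    · have := hy.2.2.2 _ _ (Fin.castSucc_lt_last i) a 0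
      dsimp only at *
      omega
    · have := hy.2.1 _ a 0
      dsimp only at *
      omega
    · dsimp only
      omega
    · dsimp only [Fin.init]
      omega

lemma ncard_levelSet_inter_lowLastBlock :
    (levelSet l m p ∩ lowLastBlock m (l (Fin.last s))).ncard =
      l (Fin.last s) * (interlacingFamilies l m p ∩ {y | y (Fin.last s) 0 = 0}).ncard := by
  rw [levelSet_inter_lowLastBlock, Set.InjOn.ncard_image, Set.ncard_prod, Set.ncard_Iio_nat]
  rintro ⟨k, y⟩ ⟨-, -, hy⟩ ⟨k', y'⟩ ⟨-, -, hy'⟩ h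
  have hk : k = k' := by
    simpa [show y _ 0 = 0 from hy, show y' _ 0 = 0 from hy'] using congrFun₂ h (Fin.last s) 0
  subst hk
  exact congrArg _ (funext₂ fun i a => Nat.add_right_cancel (congrFun₂ h i a))

lemma levelSet_sdiff_lowLastBlock (hl : ∀ i : Fin s, l (Fin.last s) ≤ l i.castSucc) :
    levelSet l m p \ lowLastBlock m (l (Fin.last s)) =
      snocAboveThreshold (l (Fin.last s)) ''
        (levelSet (l ∘ Fin.castSucc) (m ∘ Fin.castSucc) (p ∘ Fin.castSucc) ×ˢ
          monotoneTuples (m (Fin.last s)) (p (Fin.last s))) := by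
  ext y
  constructor
  · induction y using Fin.snocCases with
    | snoc x z =>
      rintro ⟨hy, hlow⟩
      simp only [lowLastBlock, Set.mem_ofPred_eq, Fin.snoc_last, Fin.init_snoc, not_lt] at hlow
      have hmono : Monotone z := (snoc_mem_interlacingFamilies.1 hy.1).2.1
      have hle (a) : threshold (l (Fin.last s)) x ≤ z a := hlow.trans (hmono (Fin.zero_le a))
      obtain ⟨hx, -, hlt⟩ := (snoc_mem_levelSet_of_threshold_le hl hle).1 hy
      exact ⟨(x, fun a => z a - threshold (l (Fin.last s)) x),
        ⟨hx, fun a b hab => Nat.sub_le_sub_right (hmono hab) _,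
          fun a => (Nat.sub_lt_iff_lt_add (hle a)).2 (hlt a)⟩,
        congrArg _ (funext fun a => Nat.sub_add_cancel (hle a))⟩
  · rintro ⟨⟨x, z⟩, ⟨hx, hmono, hlt⟩, rfl⟩
    refine ⟨(snoc_mem_levelSet_of_threshold_le hl fun a => Nat.le_add_left _ _).2
      ⟨hx, fun a b hab => Nat.add_le_add_right (hmono hab) _,
        fun a => Nat.add_lt_add_right (hlt a) _⟩, ?_⟩
    simp [lowLastBlock, snocAboveThreshold]

lemma ncard_levelSet_succ (hl : ∀ i : Fin s, l (Fin.last s) ≤ l i.castSucc) :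
    (levelSet l m p).ncard =
      l (Fin.last s) *
          ((levelSet (fun i => l i.castSucc - l (Fin.last s)) (m ∘ Fin.castSucc)
              (p ∘ Fin.castSucc)).ncard *
            (p (Fin.last s) + 1).multichoose (m (Fin.last s) - 1)) +
        (levelSet (l ∘ Fin.castSucc) (m ∘ Fin.castSucc) (p ∘ Fin.castSucc)).ncard *
          (p (Fin.last s)).multichoose (m (Fin.last s)) := by
  rw [← Set.ncard_inter_add_ncard_sdiff_eq_ncard _ (lowLastBlock m (l (Fin.last s)))
      (finite_levelSet l m p),
    ncard_levelSet_inter_lowLastBlock, ncard_interlacingFamilies_inter_head_eq_zero hl,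
    levelSet_sdiff_lowLastBlock hl, Set.ncard_image_of_injective _ (snocAboveThreshold_injective _),
    Set.ncard_prod, ncard_monotoneTuples]

end LastBlock

section CountingFormula

/-- The recursion for `p` in closed form: the sums `p i + ∑ k, m k * min (l i) (l k)` all have the
same value `P`, the number `p_{s+1}` of the counting formula. -/
def HasTotal {s : ℕ} (l m p : Fin s → ℕ) (P : ℕ) : Prop :=
  ∀ i, P = p i + ∑ k, m k * min (l i) (l k)

variable {s : ℕ}

lemma HasTotal.add_le {l m p : Fin s → ℕ} {P : ℕ} (hP : HasTotal l m p P) {i : Fin s}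
    (hm : 0 < m i) : p i + l i ≤ P := by
  rw [hP i]
  have hterm : m i * min (l i) (l i) ≤ ∑ k, m k * min (l i) (l k) :=
    single_le_sum (f := fun k => m k * min (l i) (l k)) (fun _ _ => Nat.zero_le _) (mem_univ i)
  rw [min_self] at hterm
  exact Nat.add_le_add_left ((Nat.le_mul_of_pos_left _ hm).trans hterm) _

variable {l m p : Fin (s + 1) → ℕ} {P : ℕ}

lemma HasTotal.eq_last_add (hl : Antitone l) (hP : HasTotal l m p P) :
    P = p (Fin.last s) + (∑ k, m k) * l (Fin.last s) := by
  rw [hP (Fin.last s), sum_mul]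
  simp only [min_eq_left (hl (Fin.le_last _))]

lemma hasTotal_of_recursion (hl : Antitone l)
    (hp : ∀ i : Fin s, p i.succ = p i.castSucc +
      (∑ k with k ≤ i.castSucc, m k) * (l i.castSucc - l i.succ)) :
    HasTotal l m p (p (Fin.last s) + (∑ k, m k) * l (Fin.last s)) := by
  intro i
  induction i using Fin.reverseInduction with
  | last =>
    simp only [min_eq_left (hl (Fin.le_last _)), sum_mul]
  | cast i ih =>
    rw [ih, hp i, add_assoc, sum_mul, sum_filter, ← sum_add_distrib]
    congr 1
    refine sum_congr rfl fun k _ => ?_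
    have hi := hl (Fin.castSucc_lt_succ (i := i)).le
    split_ifs with hk
    · rw [min_eq_left (hl hk), min_eq_left (hi.trans (hl hk)), ← mul_add, Nat.sub_add_cancel hi]
    · have hk := hl (Fin.castSucc_lt_iff_succ_le.1 (not_le.1 hk))
      rw [min_eq_right hk, min_eq_right (hk.trans hi), zero_add]

lemma HasTotal.castSucc_add (hl : Antitone l) (hP : HasTotal l m p P) (i : Fin s) :
    P = p i.castSucc + ∑ k : Fin s, m k.castSucc * min (l i.castSucc) (l k.castSucc) +
      m (Fin.last s) * l (Fin.last s) := by
  rw [hP i.castSucc, Fin.sum_univ_castSucc, min_eq_right (hl (Fin.le_last _)), add_assoc]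

lemma HasTotal.init (hl : Antitone l) (hP : HasTotal l m p P) :
    HasTotal (l ∘ Fin.castSucc) (m ∘ Fin.castSucc) (p ∘ Fin.castSucc)
      (p (Fin.last s) + (∑ k : Fin s, m k.castSucc) * l (Fin.last s)) := by
  intro i
  have hlast := hP.eq_last_add hl
  rw [Fin.sum_univ_castSucc, add_mul, ← add_assoc] at hlast
  exact Nat.add_right_cancel (hlast.symm.trans (hP.castSucc_add hl i))

lemma HasTotal.init_sub_last (hl : Antitone l) (hP : HasTotal l m p P) :
    HasTotal (fun i => l i.castSucc - l (Fin.last s)) (m ∘ Fin.castSucc) (p ∘ Fin.castSucc)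
      (p (Fin.last s)) := by
  intro i
  have hmin (k : Fin s) : m k.castSucc * min (l i.castSucc) (l k.castSucc) =
      m k.castSucc * min (l i.castSucc - l (Fin.last s)) (l k.castSucc - l (Fin.last s)) +
        m k.castSucc * l (Fin.last s) := by
    rw [← mul_add, Nat.sub_min_sub_right,
      Nat.sub_add_cancel (le_min (hl (Fin.le_last _)) (hl (Fin.le_last _)))]
  have hi := hP.init hl i
  simp only [Function.comp_apply, hmin, sum_add_distrib, ← sum_mul, ← add_assoc] at hi
  exact Nat.add_right_cancel hi

lemma mul_multichoose_succ_pred (q n : ℕ) [NeZero n] :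
    q * (q + 1).multichoose (n - 1) = n * q.multichoose n := by
  obtain ⟨n, rfl⟩ := Nat.exists_eq_succ_of_ne_zero (NeZero.ne n)
  have h := Nat.choose_succ_right_eq (q + n) n
  rw [Nat.add_sub_cancel] at h
  simp only [Nat.multichoose_eq, Nat.succ_eq_add_one, Nat.add_sub_cancel, ← add_assoc,
    Nat.add_right_comm q 1 n]
  rw [mul_comm, ← h, mul_comm]

theorem ncard_levelSet_mul_head [∀ i, NeZero (m i)] (hl : Antitone l) (hP : HasTotal l m p P) :
    (levelSet l m p).ncard * m 0 =
      P * (p 0 + 1).multichoose (m 0 - 1) * ∏ i : Fin s, (p i.succ).multichoose (m i.succ) := by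
  induction s generalizing P with
  | zero =>
    rw [ncard_levelSet_succ fun i => i.elim0, ncard_levelSet_zero, ncard_levelSet_zero,
      hP.eq_last_add hl]
    have hfirst := mul_multichoose_succ_pred (p 0) (m 0)
    simp only [Fin.last_zero, univ_eq_empty, prod_empty, Fin.sum_univ_succ, sum_empty]
    linear_combination -hfirst
  | succ s ih =>
    have hc := hl.comp_monotone Fin.strictMono_castSucc.monotone
    have (i : Fin (s + 1)) : NeZero ((m ∘ Fin.castSucc) i) := inferInstanceAs (NeZero (m _))
    have hinit := ih (l := l ∘ Fin.castSucc) (m := m ∘ Fin.castSucc) (p := p ∘ Fin.castSucc) hc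
      (hP.init hl)
    have hshift := ih (l := fun i => l i.castSucc - l (Fin.last _)) (m := m ∘ Fin.castSucc)
      (p := p ∘ Fin.castSucc) (fun i j hij => Nat.sub_le_sub_right (hc hij) _) (hP.init_sub_last hl)
    have hlast := mul_multichoose_succ_pred (p (Fin.last _)) (m (Fin.last (s + 1)))
    rw [ncard_levelSet_succ (fun i => hl (Fin.le_last _)), Fin.prod_univ_castSucc,
      hP.eq_last_add hl, Fin.sum_univ_castSucc]
    simp only [Function.comp_apply, Fin.castSucc_zero, ← Fin.succ_castSucc, Fin.succ_last,
      Nat.succ_eq_add_one] at hinit hshift ⊢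
    linear_combination
      l (Fin.last _) * (p (Fin.last _) + 1).multichoose (m (Fin.last _) - 1) * hshift +
      (p (Fin.last _)).multichoose (m (Fin.last _)) * hinit +
      l (Fin.last _) * (p 0 + 1).multichoose (m 0 - 1) *
        (∏ i : Fin s, (p i.castSucc.succ).multichoose (m i.castSucc.succ)) * hlast

end CountingFormula

theorem stmt15_general (s : ℕ) (hs : 0 < s) (l m : Fin s → ℕ)
    (hlpos : ∀ i, 0 < l i) (hmpos : ∀ i, 0 < m i) (hl : Antitone l)
    (p : Fin s → ℕ)
    (hrec : ∀ i j : Fin s, (j : ℕ) = (i : ℕ) + 1 →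
      p j = p i + (∑ k ∈ Finset.univ.filter (fun k : Fin s => k ≤ i), m k) * (l i - l j))
    (P : ℕ) (hP : P = p ⟨s - 1, Nat.sub_one_lt hs.ne'⟩ +
      (∑ i, m i) * l ⟨s - 1, Nat.sub_one_lt hs.ne'⟩) :
    ((((Finset.univ : Finset ((i : Fin s) → Fin (m i) → Fin P)).filter
        (fun x =>
          (∀ i : Fin s, ∀ j k : Fin (m i), j ≤ k → x i j ≤ x i k) ∧
          (∀ i : Fin s, ∀ j k : Fin (m i),
            (x i j).val ≤ p i + min (x i k).val (l i - 1)) ∧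
          (∀ i j : Fin s, i < j → ∀ a : Fin (m i), ∀ b : Fin (m j),
            (x j b).val ≤ p j + (x i a).val) ∧
          (∀ i j : Fin s, i < j → ∀ a : Fin (m i), ∀ b : Fin (m j),
            (x i a).val + l j + 1 ≤ p i + l i + (x j b).val))).card : ℚ)) =
    (P : ℚ) / (m ⟨0, hs⟩ : ℚ) *
      (Nat.choose (p ⟨0, hs⟩ + m ⟨0, hs⟩ - 1) (m ⟨0, hs⟩ - 1) : ℚ) *
      ∏ i ∈ Finset.univ.filter (fun i : Fin s => 0 < (i : ℕ)),
        (Nat.choose (p i + m i - 1) (m i) : ℚ) := by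
  obtain ⟨s, rfl⟩ := Nat.exists_eq_succ_of_ne_zero hs.ne'
  have : ∀ i, NeZero (m i) := fun i => .of_pos (hmpos i)
  have htotal : HasTotal l m p P :=
    hP ▸ hasTotal_of_recursion hl fun i => hrec i.castSucc i.succ rfl
  have hlt : ∀ x ∈ levelSet l m p, ∀ i a, x i a < P :=
    fun x hx i a => (hx.2 i a).trans_le (htotal.add_le (hmpos i))
  have hcount := ncard_levelSet_mul_head hl htotal
  have hhead : p 0 + 1 + (m 0 - 1) - 1 = p 0 + m 0 - 1 := by
    have := hmpos 0
    omega
  simp only [Nat.multichoose_eq, hhead] at hcount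
  rw [card_filter_fin_eq_ncard hlt, prod_filter, Fin.prod_univ_succ, div_mul_eq_mul_div,
    div_mul_eq_mul_div, eq_div_iff (Nat.cast_ne_zero.2 (hmpos _).ne')]
  · simpa using mod_cast hcount
  · exact fun x => (mem_levelSet_iff_le_add_min hlpos).symm

theorem stmt15 (s : ℕ) (hs : 0 < s) (l m : Fin s → ℕ)
    (hlpos : ∀ i, 0 < l i) (hmpos : ∀ i, 0 < m i)
    (hdec : ∀ i j : Fin s, i < j → l j < l i)
    (p : Fin s → ℕ)
    (hrec : ∀ i j : Fin s, (j : ℕ) = (i : ℕ) + 1 →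
      p j = p i + (∑ k ∈ Finset.univ.filter (fun k : Fin s => k ≤ i), m k) * (l i - l j))
    (P : ℕ) (hP : P = p ⟨s - 1, by omega⟩ + (∑ i, m i) * l ⟨s - 1, by omega⟩) :
    ((((Finset.univ : Finset ((i : Fin s) → Fin (m i) → Fin P)).filter
        (fun x =>
          (∀ i : Fin s, ∀ j k : Fin (m i), j ≤ k → x i j ≤ x i k) ∧
          (∀ i : Fin s, ∀ j k : Fin (m i),
            (x i j).val ≤ p i + min (x i k).val (l i - 1)) ∧
          (∀ i j : Fin s, i < j → ∀ a : Fin (m i), ∀ b : Fin (m j),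
            (x j b).val ≤ p j + (x i a).val) ∧
          (∀ i j : Fin s, i < j → ∀ a : Fin (m i), ∀ b : Fin (m j),
            (x i a).val + l j + 1 ≤ p i + l i + (x j b).val))).card : ℚ)) =
    (P : ℚ) / (m ⟨0, hs⟩ : ℚ) *
      (Nat.choose (p ⟨0, hs⟩ + m ⟨0, hs⟩ - 1) (m ⟨0, hs⟩ - 1) : ℚ) *
      ∏ i ∈ Finset.univ.filter (fun i : Fin s => 0 < (i : ℕ)),
        (Nat.choose (p i + m i - 1) (m i) : ℚ) :=
  stmt15_general s hs l m hlpos hmpos (StrictAnti.antitone fun i j => hdec i j) p hrec P hP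
end

section
/- Total count check: for integers L ≥ 2M ≥ 0, the sum over all partitions λ of M of |Ω°(λ, L)| equals binom(L, M), where Ω°(λ,L) is the periodic angle-variable set and |Ω°(λ,L)| = (L/m_1)·binom(p_1+m_1−1, m_1−1)·∏_{i=2}^s binom(p_i+m_i−1, m_i) with the data ℓ_i, m_i, p_i determined by λ. -/
open Finset

/-- Vacancy number `p(ℓ) = L − 2 Σ_j min(ℓ, ℓ_j) m_j` for the partition with
multiset of parts `parts`. -/
def vac (L : ℕ) (parts : Multiset ℕ) (ℓ : ℕ) : ℕ :=
  L - 2 * (parts.map (fun ℓ' => min ℓ ℓ')).sum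

/-- The counting formula `(L/m₁)·C(p₁+m₁−1, m₁−1)·∏_{i≥2} C(p_i+m_i−1, m_i)`
for `|Ω°(λ,L)|`, where the index 1 corresponds to the largest part of `λ`
(interpreted as `1` for the empty partition). -/
noncomputable def levelSetCard (L : ℕ) (parts : Multiset ℕ) : ℚ :=
  if parts = 0 then 1 else
    (L : ℚ) / (parts.count parts.sup : ℚ) *
      (Nat.choose (vac L parts parts.sup + parts.count parts.sup - 1)
        (parts.count parts.sup - 1) : ℚ) *
      ∏ ℓ ∈ parts.toFinset.erase parts.sup,
        (Nat.choose (vac L parts ℓ + parts.count ℓ - 1) (parts.count ℓ) : ℚ)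

/-!
Put `c = L − 2M`. Deleting the first column of the Young diagram of `λ`, of height `n`, keeps `c`,
turns the vacancy number `p(ℓ + 1)` into `p(ℓ)`, and removes exactly the factor of `|Ω°(λ, L)| / L`
that belongs to the parts equal to `1`. By induction on `M`, the sum of `|Ω°(λ, L)| / L` over the
partitions of `M` with `n` parts is therefore the Narayana type number
`C(M, n) C(L − M − 1, n − 1) / M`, the induction step being an instance of the Pfaff–Saalschütz
identity. By Vandermonde these numbers add up to `C(L − 1, M − 1) / M = C(L, M) / L`.
-/

theorem add_choose_eq_sum_range (m n k : ℕ) :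
    (m + n).choose k = ∑ i ∈ range (k + 1), m.choose i * n.choose (k - i) := by
  rw [Nat.add_choose_eq, Nat.sum_antidiagonal_eq_sum_range_succ_mk]

theorem sum_range_choose_add_mul_choose (m n r : ℕ) {K : ℕ} (hK : min m n < K) :
    ∑ j ∈ range K, (m + r).choose (j + r) * n.choose j = (m + n + r).choose m := by
  have hzero : ∀ j ≥ min m n + 1, (m + r).choose (j + r) * n.choose j = 0 := by
    intro j hj
    rcases lt_or_ge n j with hn | hn
    · rw [Nat.choose_eq_zero_of_lt hn, mul_zero]
    · rw [Nat.choose_eq_zero_of_lt (by lia), zero_mul]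
  calc ∑ j ∈ range K, (m + r).choose (j + r) * n.choose j
      = ∑ j ∈ range (m + 1), (m + r).choose (j + r) * n.choose j := by
        rw [eventually_constant_sum hzero hK,
          eventually_constant_sum hzero (Nat.succ_le_succ (min_le_left m n))]
    _ = ∑ j ∈ range (m + 1), n.choose j * (m + r).choose (m - j) := by
        refine sum_congr rfl fun j hj => ?_
        have hjm : j ≤ m := mem_range_succ_iff.1 hj
        rw [Nat.choose_symm_of_eq_add (show m + r = (j + r) + (m - j) by lia), mul_comm]
    _ = (m + n + r).choose m := by
        rw [← add_choose_eq_sum_range, add_left_comm, add_assoc]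

theorem sum_range_choose_mul_choose_mul_choose (a y r : ℕ) {j N : ℕ} (hj : j ≤ N) :
    ∑ s ∈ range (N + 1), (a + r).choose (s + r) * (s + r).choose (j + r) * y.choose (N - s) =
      (a + r).choose (j + r) * (a + y - j).choose (N - j) := by
  obtain ⟨K, rfl⟩ := Nat.exists_eq_add_of_le hj
  have hlow : ∀ s ∈ range j,
      (a + r).choose (s + r) * (s + r).choose (j + r) * y.choose (j + K - s) = 0 := by
    intro s hs
    rw [Nat.choose_eq_zero_of_lt (show s + r < j + r by grind), mul_zero, zero_mul]
  have hhigh : ∀ i, (a + r).choose (j + i + r) * (j + i + r).choose (j + r) *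
      y.choose (j + K - (j + i)) =
        (a + r).choose (j + r) * ((a - j).choose i * y.choose (K - i)) := by
    intro i
    rw [Nat.choose_mul (by lia), Nat.add_sub_add_right, mul_assoc]
    congr 3 <;> lia
  rw [add_assoc, sum_range_add, sum_eq_zero hlow, zero_add, sum_congr rfl fun i _ => hhigh i,
    ← mul_sum, ← add_choose_eq_sum_range, Nat.add_sub_cancel_left]
  rcases lt_or_ge a j with haj | haj
  · rw [Nat.choose_eq_zero_of_lt (show a + r < j + r by lia), zero_mul, zero_mul]
  · rw [Nat.sub_add_comm haj]

theorem choose_sub_mul_choose_add (m : ℕ) {s N : ℕ} (hs : s ≤ N) :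
    (m + N).choose (N - s) * (m + s).choose s = (m + N).choose N * N.choose s := by
  have h := Nat.choose_mul (n := m + N) (Nat.sub_le N s)
  rw [Nat.choose_symm hs, Nat.sub_sub_self hs, show m + N - (N - s) = m + s by lia] at h
  exact h.symm

theorem sum_choose_pfaff_saalschutz (a b r N : ℕ) :
    ∑ j ∈ range (N + 1),
        (a + b + r + N - j).choose (N - j) * (a + r).choose (j + r) * b.choose j =
      (a + r + N).choose (r + N) * (b + r + N).choose N := by
  -- Expand the first two factors by Vandermonde in a new index `s`; the sum over `j`, and then the
  -- sum over `s`, is again of Vandermonde type.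
  calc
    _ = ∑ j ∈ range (N + 1), ∑ s ∈ range (N + 1), (a + r).choose (s + r) *
          (b + r + N).choose (N - s) * ((s + r).choose (j + r) * b.choose j) := by
      refine sum_congr rfl fun j hj => ?_
      rw [mul_comm (Nat.choose _ _) ((a + r).choose _),
        show a + b + r + N - j = a + (b + r + N) - j by simp only [add_assoc],
        ← sum_range_choose_mul_choose_mul_choose a _ r (mem_range_succ_iff.1 hj), sum_mul]
      exact sum_congr rfl fun s _ => by ring
    _ = ∑ s ∈ range (N + 1), (b + r + N).choose N * ((a + r).choose (s + r) * N.choose s) := by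
      rw [sum_comm]
      refine sum_congr rfl fun s hs => ?_
      have hsN : s ≤ N := mem_range_succ_iff.1 hs
      rw [← mul_sum, sum_range_choose_add_mul_choose s b r (by lia), mul_assoc,
        show s + b + r = b + r + s by ring, choose_sub_mul_choose_add _ hsN]
      ring
    _ = _ := by
      rw [← mul_sum, sum_range_choose_add_mul_choose a N r (by lia), mul_comm,
        Nat.choose_symm_of_eq_add (show a + N + r = a + (r + N) by ring), add_right_comm]

theorem choose_add_succ_div (a k : ℕ) :
    ((a + 1 + k).choose k : ℚ) / (a + k + 1) = ((a + k).choose k : ℚ) / (a + 1) := by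
  have h : (a + 1 + k).choose k * (a + 1) = (a + k).choose k * (a + k + 1) := by
    rw [Nat.choose_mul_succ_eq, add_right_comm a k 1, Nat.add_sub_cancel]
  rw [div_eq_div_iff (by positivity) (by positivity)]
  exact_mod_cast h

/-- Prepend a column of height `n` to the Young diagram with rows `t`: pad `t` with empty rows and
add one box to each row. It is meant for `t.card ≤ n`. -/
def addColumn (n : ℕ) (t : Multiset ℕ) : Multiset ℕ :=
  (t + Multiset.replicate (n - t.card) 0).map Nat.succ

/-- Remove the first column of the Young diagram with rows `s`. -/
def removeColumn (s : Multiset ℕ) : Multiset ℕ :=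
  (s.map Nat.pred).filter (· ≠ 0)

theorem card_addColumn {n : ℕ} {t : Multiset ℕ} (h : t.card ≤ n) : (addColumn n t).card = n := by
  simp [addColumn, h]

theorem sum_addColumn {n : ℕ} {t : Multiset ℕ} (h : t.card ≤ n) :
    (addColumn n t).sum = t.sum + n := by
  simp [addColumn, Multiset.sum_map_add, add_assoc, h]

theorem pos_of_mem_addColumn {n x : ℕ} {t : Multiset ℕ} (hx : x ∈ addColumn n t) : 0 < x := by
  obtain ⟨y, -, rfl⟩ := Multiset.mem_map.1 hx
  exact y.succ_pos

theorem count_addColumn (n : ℕ) (t : Multiset ℕ) {ℓ : ℕ} (hℓ : 0 < ℓ) :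
    (addColumn n t).count (ℓ + 1) = t.count ℓ := by
  rw [addColumn, Multiset.count_map_eq_count' _ _ Nat.succ_injective, Multiset.count_add,
    Multiset.count_replicate, if_neg hℓ.ne, add_zero]

theorem count_one_addColumn (n : ℕ) {t : Multiset ℕ} (hpos : ∀ x ∈ t, 0 < x) :
    (addColumn n t).count 1 = n - t.card := by
  have hzero : t.count 0 = 0 := Multiset.count_eq_zero.2 fun h => (hpos 0 h).false
  rw [addColumn, Multiset.count_map_eq_count' _ _ Nat.succ_injective, Multiset.count_add, hzero,
    Multiset.count_replicate_self, zero_add]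

theorem sup_map_succ {s : Multiset ℕ} (hs : s ≠ 0) : (s.map Nat.succ).sup = s.sup + 1 := by
  induction s using Multiset.induction_on with
  | empty => contradiction
  | cons a s ih =>
    rcases eq_or_ne s 0 with rfl | hs
    · simp
    · rw [Multiset.map_cons, Multiset.sup_cons, ih hs, Multiset.sup_cons]
      exact max_add_add_right a s.sup 1

theorem sup_addColumn {n : ℕ} {t : Multiset ℕ} (h : addColumn n t ≠ 0) :
    (addColumn n t).sup = t.sup + 1 := by
  have hne : t + Multiset.replicate (n - t.card) 0 ≠ 0 := mt Multiset.map_eq_zero.2 h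
  have hzero : (Multiset.replicate (n - t.card) 0).sup = 0 :=
    Nat.le_zero.1 (Multiset.sup_le.2 fun x hx => (Multiset.eq_of_mem_replicate hx).le)
  rw [addColumn, sup_map_succ hne, Multiset.sup_add, hzero, sup_eq_left.2 t.sup.zero_le]

theorem card_removeColumn_le (s : Multiset ℕ) : (removeColumn s).card ≤ s.card :=
  (Multiset.card_le_card (Multiset.filter_le _ _)).trans_eq (Multiset.card_map _ _)

theorem pos_of_mem_removeColumn {x : ℕ} {s : Multiset ℕ} (hx : x ∈ removeColumn s) : 0 < x :=
  Nat.pos_of_ne_zero (Multiset.mem_filter.1 hx).2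

theorem removeColumn_addColumn (n : ℕ) {t : Multiset ℕ} (hpos : ∀ x ∈ t, 0 < x) :
    removeColumn (addColumn n t) = t := by
  have hfilter : t.filter (· ≠ 0) = t := Multiset.filter_eq_self.2 fun x hx => (hpos x hx).ne'
  simp [removeColumn, addColumn, Multiset.filter_add, hfilter, Multiset.filter_eq_nil,
    Multiset.mem_replicate]

theorem addColumn_removeColumn {s : Multiset ℕ} (hpos : ∀ x ∈ s, 0 < x) :
    addColumn s.card (removeColumn s) = s := by
  set u := s.map Nat.pred with hu
  have hsplit : u.filter (· ≠ 0) + Multiset.replicate (u.count 0) 0 = u := by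
    rw [← Multiset.filter_eq', add_comm, Multiset.filter_add_not]
  have hcount : s.card - (removeColumn s).card = u.count 0 := by
    have := congrArg Multiset.card hsplit
    rw [Multiset.card_add, Multiset.card_replicate, hu, Multiset.card_map] at this
    rw [removeColumn]
    lia
  rw [addColumn, hcount, removeColumn, hsplit, hu, Multiset.map_map]
  exact (Multiset.map_congr rfl fun x hx => Nat.succ_pred_eq_of_pos (hpos x hx)).trans
    (Multiset.map_id s)

theorem sum_removeColumn {s : Multiset ℕ} (hpos : ∀ x ∈ s, 0 < x) :
    (removeColumn s).sum + s.card = s.sum := by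
  rw [← sum_addColumn (card_removeColumn_le s), addColumn_removeColumn hpos]

theorem card_parts_pos {M : ℕ} (hM : 0 < M) (p : M.Partition) : 0 < p.parts.card := by
  refine Multiset.card_pos.2 fun hzero => hM.ne ?_
  rw [← p.parts_sum, hzero, Multiset.sum_zero]

theorem card_parts_le {M : ℕ} (p : M.Partition) : p.parts.card ≤ M := by
  simpa [p.parts_sum] using
    Multiset.card_nsmul_le_sum (s := p.parts) (a := 1) fun _ => p.parts_pos

theorem sum_partition_card_eq_sum_addColumn {α : Type*} [AddCommMonoid α] (M n : ℕ)
    (f : Multiset ℕ → α) :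
    ∑ p : (M + n).Partition with p.parts.card = n, f p.parts =
      ∑ p : M.Partition with p.parts.card ≤ n, f (addColumn n p.parts) := by
  have hremove : ∀ p : (M + n).Partition, p.parts.card = n →
      addColumn n (removeColumn p.parts) = p.parts := by
    intro p hp
    simpa only [hp] using addColumn_removeColumn fun _ => p.parts_pos
  refine sum_bij'
    (fun p hp => ⟨removeColumn p.parts, pos_of_mem_removeColumn, ?_⟩)
    (fun p hp => ⟨addColumn n p.parts, pos_of_mem_addColumn, ?_⟩) ?_ ?_ ?_ ?_ ?_
  · have := sum_removeColumn fun _ => p.parts_pos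
    have := p.parts_sum
    have := (mem_filter_univ p).1 hp
    lia
  · rw [sum_addColumn ((mem_filter_univ p).1 hp), p.parts_sum]
  · intro p hp
    exact (mem_filter_univ _).2
      ((card_removeColumn_le p.parts).trans_eq ((mem_filter_univ p).1 hp))
  · intro p hp
    simpa using card_addColumn ((mem_filter_univ p).1 hp)
  · intro p hp
    exact Nat.Partition.ext (hremove p ((mem_filter_univ p).1 hp))
  · intro p hp
    exact Nat.Partition.ext (removeColumn_addColumn n fun _ => p.parts_pos)
  · intro p hp
    rw [hremove p ((mem_filter_univ p).1 hp)]

theorem sum_partition_card_le_eq_sum_range {α : Type*} [AddCommMonoid α] {M : ℕ} (hM : 0 < M)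
    (n : ℕ) (f : M.Partition → α) :
    ∑ p : M.Partition with p.parts.card ≤ n, f p =
      ∑ j ∈ range n, ∑ p : M.Partition with p.parts.card = j + 1, f p := by
  rw [← sum_fiberwise_of_maps_to (g := fun p => p.parts.card - 1) (t := range n)]
  · refine sum_congr rfl fun j hj => sum_congr ?_ fun _ _ => rfl
    ext p
    have := card_parts_pos hM p
    have := mem_range.1 hj
    simp only [mem_filter, mem_univ, true_and]
    lia
  · intro p hp
    have := card_parts_pos hM p
    have := (mem_filter_univ p).1 hp
    exact mem_range.2 (by lia)

/-- The vacancy number `p(ℓ)` written in terms of the vacancy number `c = L − 2M` of the largest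
part, so that no truncated subtraction from `L` is left: `p(ℓ) = c + 2 Σ_j max(ℓ_j − ℓ, 0) m_j`. -/
def vacOfTop (c : ℕ) (s : Multiset ℕ) (ℓ : ℕ) : ℕ :=
  c + 2 * (s.map (· - ℓ)).sum

theorem vac_two_mul_sum_add (c : ℕ) (s : Multiset ℕ) (ℓ : ℕ) :
    vac (2 * s.sum + c) s ℓ = vacOfTop c s ℓ := by
  have hsplit : s.sum = (s.map (min ℓ ·)).sum + (s.map (· - ℓ)).sum := by
    rw [← Multiset.sum_map_add, ← Multiset.map_congr rfl fun x _ => show x = _ by lia,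
      Multiset.map_id']
  rw [vac, vacOfTop, hsplit]
  lia

theorem vacOfTop_zero (c : ℕ) (s : Multiset ℕ) : vacOfTop c s 0 = c + 2 * s.sum := by
  simp [vacOfTop]

theorem vacOfTop_sup (c : ℕ) (s : Multiset ℕ) : vacOfTop c s s.sup = c := by
  have hzero : (s.map (· - s.sup)).sum = 0 :=
    Multiset.sum_eq_zero fun y hy => by
      obtain ⟨x, hx, rfl⟩ := Multiset.mem_map.1 hy
      exact Nat.sub_eq_zero_of_le (Multiset.le_sup hx)
  rw [vacOfTop, hzero, mul_zero, add_zero]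

theorem vacOfTop_addColumn (c n : ℕ) (t : Multiset ℕ) (ℓ : ℕ) :
    vacOfTop c (addColumn n t) (ℓ + 1) = vacOfTop c t ℓ := by
  simp [vacOfTop, addColumn]

/-- The quotient `|Ω°(λ, L)| / L` for a nonempty partition `λ ⊢ M` with `c = L − 2M`. All sizes
below the largest part enter the product; those that are not parts of `λ` contribute `1`. -/
def normalizedCard (c : ℕ) (s : Multiset ℕ) : ℚ :=
  ((c + s.count s.sup - 1).choose (s.count s.sup - 1) : ℚ) / s.count s.sup *
    ∏ ℓ ∈ Ico 1 s.sup, ((vacOfTop c s ℓ + s.count ℓ - 1).choose (s.count ℓ) : ℚ)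

theorem levelSetCard_eq_mul_normalizedCard (c : ℕ) {s : Multiset ℕ} (hs : s ≠ 0)
    (hpos : ∀ x ∈ s, 0 < x) :
    levelSetCard (2 * s.sum + c) s = (2 * s.sum + c : ℕ) * normalizedCard c s := by
  have hsub : s.toFinset.erase s.sup ⊆ Ico 1 s.sup := fun ℓ hℓ => by
    obtain ⟨hne, hmem⟩ := mem_erase.1 hℓ
    rw [Multiset.mem_toFinset] at hmem
    exact mem_Ico.2 ⟨hpos ℓ hmem, lt_of_le_of_ne (Multiset.le_sup hmem) hne⟩
  have hone : ∀ ℓ ∈ Ico 1 s.sup, ℓ ∉ s.toFinset.erase s.sup →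
      ((vacOfTop c s ℓ + s.count ℓ - 1).choose (s.count ℓ) : ℚ) = 1 := fun ℓ hℓ hnot => by
    have hcount : s.count ℓ = 0 := Multiset.count_eq_zero.2 fun hmem =>
      hnot (mem_erase.2 ⟨(mem_Ico.1 hℓ).2.ne, Multiset.mem_toFinset.2 hmem⟩)
    rw [hcount, Nat.choose_zero_right, Nat.cast_one]
  simp only [levelSetCard, if_neg hs, vac_two_mul_sum_add, vacOfTop_sup, normalizedCard,
    prod_subset hsub hone]
  ring

theorem normalizedCard_addColumn (c n : ℕ) {t : Multiset ℕ} (ht : t ≠ 0)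
    (hpos : ∀ x ∈ t, 0 < x) :
    normalizedCard c (addColumn n t) =
      ((c + 2 * t.sum + (n - t.card) - 1).choose (n - t.card) : ℚ) * normalizedCard c t := by
  have hsup : 0 < t.sup := by
    obtain ⟨x, hx⟩ := Multiset.exists_mem_of_ne_zero ht
    exact (hpos x hx).trans_le (Multiset.le_sup hx)
  have hne : addColumn n t ≠ 0 := by simp [addColumn, ht]
  have hshift : ∀ ℓ ∈ Ico 1 t.sup,
      ((vacOfTop c (addColumn n t) (ℓ + 1) + (addColumn n t).count (ℓ + 1) - 1).choose
        ((addColumn n t).count (ℓ + 1)) : ℚ) =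
      ((vacOfTop c t ℓ + t.count ℓ - 1).choose (t.count ℓ) : ℚ) := fun ℓ hℓ => by
    rw [vacOfTop_addColumn, count_addColumn n t (mem_Ico.1 hℓ).1]
  rw [normalizedCard, sup_addColumn hne, count_addColumn n t hsup,
    prod_eq_prod_Ico_succ_bot (Nat.lt_add_of_pos_left hsup), ← prod_Ico_add' _ 1 t.sup 1,
    prod_congr rfl hshift, ← zero_add 1, vacOfTop_addColumn, vacOfTop_zero, zero_add,
    count_one_addColumn n hpos, normalizedCard]
  ring

theorem normalizedCard_addColumn_zero (c n : ℕ) :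
    normalizedCard c (addColumn (n + 1) 0) = ((c + n).choose n : ℚ) / (n + 1) := by
  have hsup : (addColumn (n + 1) 0).sup = 1 := sup_addColumn (by simp [addColumn])
  have hcount : (addColumn (n + 1) 0).count 1 = n + 1 := count_one_addColumn _ (by simp)
  simp [normalizedCard, hsup, hcount, ← add_assoc]

theorem sum_normalizedCard_eq_sum_removeColumn (c a N : ℕ) :
    ∑ p : (a + 1 + (N + 1)).Partition with p.parts.card = N + 1, normalizedCard c p.parts =
      ∑ j ∈ range (N + 1), ((a + (a + c) + 1 + N - j).choose (N - j) : ℚ) *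
        ∑ p : (a + 1).Partition with p.parts.card = j + 1, normalizedCard c p.parts := by
  rw [sum_partition_card_eq_sum_addColumn, sum_partition_card_le_eq_sum_range a.succ_pos]
  refine sum_congr rfl fun j hj => ?_
  rw [mul_sum]
  refine sum_congr rfl fun p hp => ?_
  have hjN : j ≤ N := mem_range_succ_iff.1 hj
  have hne : p.parts ≠ 0 := Multiset.card_pos.1 (card_parts_pos a.succ_pos p)
  rw [normalizedCard_addColumn c _ hne fun _ => p.parts_pos, p.parts_sum,
    (mem_filter_univ p).1 hp, Nat.succ_sub_succ,
    show c + 2 * a.succ + (N - j) - 1 = a + (a + c) + 1 + N - j by lia]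

theorem sum_normalizedCard_of_card_eq (c M n : ℕ) :
    ∑ p : (M + 1).Partition with p.parts.card = n + 1, normalizedCard c p.parts =
      ((M + 1).choose (n + 1) : ℚ) * (M + c).choose n / (M + 1) := by
  induction M using Nat.strong_induction_on generalizing n with
  | _ M ih =>
  rcases lt_trichotomy M n with hlt | rfl | hgt
  · have hempty : ∀ p : (M + 1).Partition, p.parts.card ≠ n + 1 := fun p => by
      have := card_parts_le p
      lia
    simp [hempty, Nat.choose_eq_zero_of_lt (Nat.succ_lt_succ hlt)]
  · have hbij := sum_partition_card_eq_sum_addColumn 0 (M + 1) (normalizedCard c)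
    rw [zero_add] at hbij
    rw [hbij]
    simp [normalizedCard_addColumn_zero, add_comm c, filter_true_of_mem]
  · obtain ⟨a, rfl⟩ : ∃ a, M = a + (n + 1) := ⟨M - (n + 1), by lia⟩
    have hsaal := sum_choose_pfaff_saalschutz a (a + c) 1 n
    rw [add_right_comm a, sum_normalizedCard_eq_sum_removeColumn]
    calc
      _ = (∑ j ∈ range (n + 1), (a + (a + c) + 1 + n - j).choose (n - j) *
            (a + 1).choose (j + 1) * (a + c).choose j : ℕ) / (a + 1 : ℚ) := by
        push_cast
        rw [sum_div]
        refine sum_congr rfl fun j _ => ?_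
        rw [ih a (by lia)]
        ring
      _ = ((a + (n + 1)).choose (n + 1) : ℚ) / (a + 1) * (a + (n + 1) + c).choose n := by
        rw [hsaal, add_comm 1 n, show a + 1 + n = a + (n + 1) by ring,
          show a + c + 1 + n = a + (n + 1) + c by ring, Nat.cast_mul, mul_div_right_comm]
      _ = _ := by
        rw [← choose_add_succ_div, mul_div_right_comm]
        push_cast
        rfl

theorem sum_normalizedCard (c M : ℕ) :
    ∑ p : (M + 1).Partition, normalizedCard c p.parts =
      ((2 * M + 1 + c).choose M : ℚ) / (M + 1) := by
  have hall : ∀ p ∈ (univ : Finset (M + 1).Partition), p.parts.card ≤ M + 1 :=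
    fun p _ => card_parts_le p
  rw [← filter_true_of_mem hall, sum_partition_card_le_eq_sum_range M.succ_pos]
  simp only [sum_normalizedCard_of_card_eq]
  rw [← sum_div]
  have h := sum_range_choose_add_mul_choose M (M + c) 1 (K := M + 1) (by lia)
  rw [show M + (M + c) + 1 = 2 * M + 1 + c by ring] at h
  exact_mod_cast congrArg (fun k : ℕ => (k : ℚ) / (M + 1)) h

theorem stmt17 (L M : ℕ) (h : 2 * M ≤ L) :
    ∑ lam : Nat.Partition M, levelSetCard L lam.parts = (Nat.choose L M : ℚ) := by
  obtain ⟨c, rfl⟩ := Nat.exists_eq_add_of_le h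
  rcases M with _ | M
  · simp [levelSetCard]
  have hcard : ∀ p : (M + 1).Partition,
      levelSetCard (2 * (M + 1) + c) p.parts =
        (2 * (M + 1) + c : ℕ) * normalizedCard c p.parts := fun p => by
    have hne : p.parts ≠ 0 := Multiset.card_pos.1 (card_parts_pos M.succ_pos p)
    simpa only [p.parts_sum] using
      levelSetCard_eq_mul_normalizedCard c hne fun _ => p.parts_pos
  have habsorb := Nat.add_one_mul_choose_eq (2 * M + 1 + c) M
  rw [show 2 * M + 1 + c + 1 = 2 * (M + 1) + c by ring] at habsorb
  simp only [hcard]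
  rw [← mul_sum, sum_normalizedCard, ← mul_div_assoc, div_eq_iff (by positivity)]
  exact_mod_cast habsorb
end
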